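/- arXiv:2301.07216 — 8 statements merged into one kernel-verified Lean document; each statement's English description precedes it below -/
import Mathlib

section
/- Let n ≥ 2 be an integer and let L(n) = (n, n−1, …, ⌈n/2⌉+1, ⌈n/2⌉−1, …, 2, 1) (the decreasing sequence from n to 1 with ⌈n/2⌉ omitted, of length n−1). Consider the directed graph G on vertex set V = {1, 2, …, n−1} with edge set E = {(i, L(n)_i) : 1 < i < n}. Then G is a directed path visiting every vertex of V exactly once: it is acyclic, the unique vertex of in-degree 0 is ⌈n/2⌉, the unique vertex of out-degree 0 is 1, and every other vertex has in-degree and out-degree 1. -/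
/-!
Write `m = ⌈n/2⌉`. Splitting the list `n, …, 1` at the omitted value `m` gives
`L(n)_i = n + 1 - i` for `i ≤ n - m` and `L(n)_i = n - i` for `n - m < i < n` (`Lseq_getD`).
Following the edges from `m`, the walk zigzags outwards, alternating between the two halves of
`{1, …, n-1}`: for `n = 2k` it is `k, k+1, k-1, k+2, …, 2k-1, 1`, and for `n = 2k+1` it is
`k+1, k, k+2, k-1, …, 2k, 1`. The closed form `zigzag n j` of its `j`-th vertex is injective
with values in `{1, …, n-1}`, so the first `n - 1` vertices exhaust this set.
-/

/-- RSK row insertion of `x` into a tableau (given as its list of rows). -/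
def rsInsert : List (List ℕ) → ℕ → List (List ℕ)
  | [], x => [[x]]
  | r :: rest, x =>
    match r.findIdx? (fun b => decide (x < b)) with
    | none => (r ++ [x]) :: rest
    | some i => (r.set i x) :: rsInsert rest (r.getD i 0)

/-- The RSK insertion tableau `P(σ)`. -/
def rsTableau (σ : List ℕ) : List (List ℕ) := σ.foldl rsInsert []

/-- The RSK shape `Γ(P(σ))`, as the list of row lengths of `P(σ)`. -/
def rskShape (σ : List ℕ) : List ℕ := (rsTableau σ).map List.length

/-- Entrywise sum of two shapes, missing entries treated as `0`. -/
def shapeAdd (a b : List ℕ) : List ℕ :=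
  List.zipWithAll (fun x y => x.getD 0 + y.getD 0) a b

/-- The sequence `(σ_1, …, σ_n)` (with values in `{1,…,n}`) of a permutation of `Fin n`. -/
def seqOfPerm {n : ℕ} (π : Equiv.Perm (Fin n)) : List ℕ :=
  List.ofFn (fun i => (π i : ℕ) + 1)

/-- The cycle type of a permutation, including fixed points as parts equal to `1`. -/
def fullCycleType {n : ℕ} (π : Equiv.Perm (Fin n)) : Multiset ℕ :=
  π.cycleType + Multiset.replicate (n - π.support.card) 1

/-- `L(n) = (n, n−1, …, ⌈n/2⌉+1, ⌈n/2⌉−1, …, 2, 1)`: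
the integers `n,…,1` in decreasing order with `⌈n/2⌉` omitted. -/
def Lseq (n : ℕ) : List ℕ :=
  ((List.range' 1 n).reverse).filter (fun x => decide (x ≠ (n + 1) / 2))

/-- `w = ⌊n/2⌋ + 2p`, where `p = 1` if `n` is odd and `p = 0` if `n` is even. -/
def wval (n : ℕ) : ℕ := n / 2 + (if n % 2 = 1 then 2 else 0)

/-- `L'(n)`: the integers `n,…,1` in decreasing order with `w` omitted. -/
def L'seq (n : ℕ) : List ℕ :=
  ((List.range' 1 n).reverse).filter (fun x => decide (x ≠ wval n))

/-- The `j`-th vertex, counting from `0`, of the path starting at `⌈n/2⌉`. As `j` grows, the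
vertices with `n + j` even decrease to `1`, and those with `n + j` odd increase to `n - 1`. -/
def zigzag (n j : ℕ) : ℕ :=
  if (n + j) % 2 = 0 then (n - j) / 2 else (n + j + 1) / 2

theorem Lseq_eq_append (n : ℕ) (hn : 1 ≤ n) :
    Lseq n = (List.range' ((n + 1) / 2 + 1) (n - (n + 1) / 2)).reverse ++
      (List.range' 1 ((n + 1) / 2 - 1)).reverse := by
  obtain ⟨a, ha⟩ : ∃ a, (n + 1) / 2 = a + 1 := ⟨(n + 1) / 2 - 1, by omega⟩
  obtain ⟨b, hb⟩ : ∃ b, n = a + (b + 1) := ⟨n - a - 1, by omega⟩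
  have hsplit : List.range' 1 n =
      List.range' 1 a ++ (a + 1) :: List.range' (a + 2) b := by
    rw [hb, ← List.range'_append_1, List.range'_succ, add_comm 1 a]
  have hlow : (List.range' 1 a).filter (fun x => decide (x ≠ a + 1)) = List.range' 1 a := by
    rw [List.filter_eq_self]
    intro x hx
    rw [List.mem_range'_1] at hx
    exact decide_eq_true (by omega)
  have hhigh : (List.range' (a + 2) b).filter (fun x => decide (x ≠ a + 1)) =
      List.range' (a + 2) b := by
    rw [List.filter_eq_self]
    intro x hx
    rw [List.mem_range'_1] at hx
    exact decide_eq_true (by omega)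
  have hlen : n - (a + 1) = b := by omega
  rw [Lseq, List.filter_reverse, ha, hsplit, List.filter_append, List.filter_cons_of_neg (by simp),
    hlow, hhigh, List.reverse_append, hlen]
  rfl

theorem Lseq_getD (n i : ℕ) (hi : 1 ≤ i) (hin : i < n) :
    (Lseq n).getD (i - 1) 0 = if i ≤ n - (n + 1) / 2 then n + 1 - i else n - i := by
  rw [Lseq_eq_append n (by omega)]
  split_ifs with h
  · rw [List.getD_append _ _ _ _ (by simp; omega), List.getD_eq_getElem _ _ (by simp; omega)]
    simp
    omega
  · rw [List.getD_append_right _ _ _ _ (by simp; omega),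
      List.getD_eq_getElem _ _ (by simp; omega)]
    simp
    omega

theorem zigzag_injOn (n : ℕ) {i j : ℕ} (hi : i < n - 1) (hj : j < n - 1)
    (h : zigzag n i = zigzag n j) : i = j := by
  unfold zigzag at h
  split_ifs at h <;> omega

theorem zigzag_bounds {n j : ℕ} (hj : j < n - 1) : 1 ≤ zigzag n j ∧ zigzag n j < n := by
  unfold zigzag
  split_ifs <;> omega

/-- Consecutive vertices of the zigzag are joined by an edge `(a, L(n)_a)` with `1 < a < n`. -/
theorem zigzag_step {n j : ℕ} (hj : j + 1 < n - 1) :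
    1 < zigzag n j ∧ zigzag n j < n ∧
      (Lseq n).getD (zigzag n j - 1) 0 = zigzag n (j + 1) := by
  obtain ⟨h1, h2⟩ := zigzag_bounds (n := n) (j := j) (by omega)
  rw [Lseq_getD n _ h1 h2]
  unfold zigzag
  refine ⟨?_, ?_, ?_⟩ <;> split_ifs <;> omega

/-- the directed graph with edges `(i, L(n)_i)` for `1 < i < n` on
vertices `{1,…,n−1}` is a directed path visiting every vertex exactly once,
starting at `⌈n/2⌉` and ending at `1`. -/
theorem stmt_2 (n : ℕ) (hn : 2 ≤ n) :
    ∃ v : List ℕ, v.Perm (List.range' 1 (n - 1)) ∧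
      v.head? = some ((n + 1) / 2) ∧ v.getLast? = some 1 ∧
      v.Chain' (fun a b => 1 < a ∧ a < n ∧ (Lseq n).getD (a - 1) 0 = b) := by
  refine ⟨(List.range (n - 1)).map (zigzag n), ?_, ?_, ?_, ?_⟩
  · have hnodup : ((List.range (n - 1)).map (zigzag n)).Nodup := by
      refine List.Nodup.map_on ?_ List.nodup_range
      intro i hi j hj h
      exact zigzag_injOn n (List.mem_range.1 hi) (List.mem_range.1 hj) h
    -- A duplicate-free list inside a list of the same length is a permutation of it.
    refine (List.subperm_of_subset hnodup ?_).perm_of_length_le (by simp)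
    intro x hx
    obtain ⟨j, hj, rfl⟩ := List.mem_map.1 hx
    have := zigzag_bounds (List.mem_range.1 hj)
    rw [List.mem_range'_1]
    omega
  · rw [List.head?_eq_getElem?, List.getElem?_map, List.getElem?_range (by omega)]
    simp only [Option.map_some, zigzag, Option.some.injEq]
    split_ifs <;> omega
  · rw [List.getLast?_eq_getElem?, List.length_map, List.length_range, List.getElem?_map,
      List.getElem?_range (by omega)]
    simp only [Option.map_some, zigzag, Option.some.injEq]
    split_ifs <;> omega
  · refine List.isChain_iff_getElem.2 ?_
    intro i hi
    simp only [List.length_map, List.length_range] at hi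
    simpa only [List.getElem_map, List.getElem_range] using zigzag_step hi
end

section
/- For any two integers 1 < m < n, the permutation B(m,n) = (2, 3, …, m−1) ⊕ (⌊(n+m)/2⌋) ⊕ I^{m−1}(L(n−m+1)) ⊕ (1) of {1,…,n} is cyclic (an n-cycle), and its RSK shape is the hook Γ(P(B(m,n))) = (m, 1, 1, …, 1) with n−m ones. -/
/-- `B(m,n) = (2,3,…,m−1) ⊕ (⌊(n+m)/2⌋) ⊕ I^{m−1}(L(n−m+1)) ⊕ (1)`. -/
def Bseq (m n : ℕ) : List ℕ :=
  List.range' 2 (m - 2) ++ [(n + m) / 2] ++ (Lseq (n - m + 1)).map (· + (m - 1)) ++ [1]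

/-! ### The word -/

theorem Lseq_eq (k : ℕ) (hk : 1 ≤ k) :
    Lseq k = (List.range' ((k + 1) / 2 + 1) (k - (k + 1) / 2)).reverse ++
      (List.range' 1 ((k + 1) / 2 - 1)).reverse := by
  have h : List.range' 1 k = List.range' 1 ((k + 1) / 2 - 1) ++
      ([(k + 1) / 2] ++ List.range' ((k + 1) / 2 + 1) (k - (k + 1) / 2)) := by
    apply List.ext_getElem
    · simp; omega
    · intro i h1 h2
      simp only [List.getElem_append, List.getElem_range', List.length_range',
        List.length_singleton, List.getElem_singleton]
      split_ifs <;> omega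
  unfold Lseq
  rw [h]
  simp only [List.reverse_append, List.filter_append, List.reverse_singleton]
  rw [List.filter_eq_self.2, List.filter_eq_nil_iff.2, List.filter_eq_self.2]
  · simp
  · intro a ha; simp at ha ⊢; omega
  · intro a ha; simp at ha ⊢; omega
  · intro a ha; simp at ha ⊢; omega

theorem Bseq_eq (m n : ℕ) (hm : 1 < m) (hn : m < n) :
    Bseq m n = List.range' 2 (m - 2) ++ [(n + m) / 2] ++
      ((List.range' ((n + m) / 2 + 1) (n - (n + m) / 2)).reverse ++
        (List.range' m ((n + m) / 2 - m)).reverse) ++ [1] := by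
  unfold Bseq
  rw [Lseq_eq _ (by omega), List.map_append, List.map_reverse, List.map_reverse]
  have e : ∀ a l, List.map (· + (m - 1)) (List.range' a l) = List.range' (a + (m - 1)) l := by
    intro a l
    apply List.ext_getElem
    · simp
    · intro i h1 h2
      simp; omega
  rw [e, e]
  have e₁ : (n - m + 1 + 1) / 2 + 1 + (m - 1) = (n + m) / 2 + 1 := by omega
  have e₂ : n - m + 1 - (n - m + 1 + 1) / 2 = n - (n + m) / 2 := by omega
  have e₃ : 1 + (m - 1) = m := by omega
  have e₄ : (n - m + 1 + 1) / 2 - 1 = (n + m) / 2 - m := by omega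
  rw [e₁, e₂, e₃, e₄]

/-! ### Cyclicity -/

theorem Bseq_length (m n : ℕ) (hm : 1 < m) (hn : m < n) : (Bseq m n).length = n := by
  rw [Bseq_eq m n hm hn]; simp; omega

theorem Bseq_getElem (m n : ℕ) (hm : 1 < m) (hn : m < n) (p : ℕ) (hp : p < (Bseq m n).length) :
    (Bseq m n)[p] = if p + 2 < m then p + 2 else if p + 2 = m then (n + m) / 2 else
      if n = p + 1 then 1 else
      if (n + m) / 2 < n + m - (p + 1) then n + m - (p + 1) else n + m - 1 - (p + 1) := by
  have hl := Bseq_length m n hm hn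
  simp only [Bseq_eq m n hm hn, List.getElem_append, List.getElem_reverse, List.getElem_range',
    List.length_range', List.length_append, List.length_reverse,
    List.length_singleton, List.getElem_singleton]
  split_ifs <;> omega

/-- The `j`-th element (counting from `0`) of the orbit of `1` under `B(m,n)`, shifted down by one
to lie in `{0,…,n−1}`. -/
def orb (m n j : ℕ) : ℕ :=
  if j + 1 < m then j
  else if (n + m) % 2 = 0 then
    if (j + 1 - m) % 2 = 0 then (n + m) / 2 + (j + 1 - m) / 2 - 1
    else (n + m) / 2 - (j + 1 - m + 1) / 2 - 1
  else
    if (j + 1 - m) % 2 = 0 then (n + m) / 2 - (j + 1 - m) / 2 - 1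
    else (n + m) / 2 + (j + 1 - m + 1) / 2 - 1

theorem orb_lt (m n j : ℕ) (hm : 1 < m) (hn : m < n) (hj : j < n) : orb m n j < n := by
  unfold orb; split_ifs <;> omega

theorem orb_inj (m n i j : ℕ) (hm : 1 < m) (hi : i < n) (hj : j < n)
    (h : orb m n i = orb m n j) : i = j := by
  unfold orb at h; split_ifs at h <;> omega

theorem Bseq_orb (m n j : ℕ) (hm : 1 < m) (hn : m < n) (hj : j < n)
    (hp : orb m n j < (Bseq m n).length) :
    (Bseq m n)[orb m n j] = orb m n (if j + 1 = n then 0 else j + 1) + 1 := by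
  rw [Bseq_getElem m n hm hn]
  generalize hp : orb m n j = p
  unfold orb at hp
  by_cases h0 : j + 1 = n
  · rw [if_pos h0]
    have hq : orb m n 0 = 0 := by unfold orb; rw [if_pos (by omega)]
    rw [hq]
    split_ifs at hp <;> split_ifs <;> omega
  · rw [if_neg h0]
    generalize hq : orb m n (j + 1) = q
    unfold orb at hq
    -- Contradictory parity combinations are discarded before splitting the goal.
    split_ifs at hp <;> split_ifs at hq <;> first | omega | (split_ifs <;> omega)

theorem finRotate_val (n : ℕ) (j : Fin n) :
    (finRotate n j).val = (if (j : ℕ) + 1 = n then (0 : ℕ) else (j : ℕ) + 1 : ℕ) := by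
  cases n with
  | zero => exact j.elim0
  | succ k =>
    rw [finRotate_apply, Fin.val_add_one]
    simp only [Fin.ext_iff, Fin.val_last, Nat.add_right_cancel_iff]

theorem B_cyclic (m n : ℕ) (hm : 1 < m) (hn : m < n) :
    ∃ π : Equiv.Perm (Fin n), seqOfPerm π = Bseq m n ∧ fullCycleType π = {n} := by
  let f : Fin n → Fin n := fun j => ⟨orb m n j, orb_lt m n j hm hn j.2⟩
  have hf : Function.Injective f := fun i j h =>
    Fin.ext (orb_inj m n i j hm i.2 j.2 (congrArg Fin.val h))
  let e : Equiv.Perm (Fin n) := Equiv.ofBijective f (Finite.injective_iff_bijective.1 hf)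
  have hc : (e * finRotate n * e⁻¹).cycleType = {n} := by
    rw [Equiv.Perm.cycleType_conj]
    obtain ⟨k, rfl⟩ : ∃ k, n = k + 2 := ⟨n - 2, by omega⟩
    exact cycleType_finRotate
  refine ⟨e * finRotate n * e⁻¹, ?_, ?_⟩
  · apply List.ext_getElem
    · rw [Bseq_length m n hm hn]; simp [seqOfPerm]
    · intro i h1 h2
      have hi : i < n := by rwa [Bseq_length m n hm hn] at h2
      obtain ⟨j, hj⟩ := e.surjective ⟨i, hi⟩
      have hij : orb m n j = i := congrArg Fin.val hj
      subst hij
      rw [Bseq_orb m n j hm hn j.2]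
      simp only [seqOfPerm, List.getElem_ofFn]
      rw [← hj, ← finRotate_val]
      simp [e, f]
  · have hs := Equiv.Perm.sum_cycleType (e * finRotate n * e⁻¹)
    rw [hc, Multiset.sum_singleton] at hs
    rw [fullCycleType, hc, ← hs]
    simp

/-! ### The insertion tableau -/

/-- Inserting into a row all of whose entries are at most `x`. -/
theorem rsInsert_append (r : List ℕ) (T : List (List ℕ)) (x : ℕ) (h : ∀ y ∈ r, y ≤ x) :
    rsInsert (r :: T) x = (r ++ [x]) :: T := by
  have : r.findIdx? (fun b => decide (x < b)) = none := by
    rw [List.findIdx?_eq_none_iff]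
    intro y hy
    simpa using h y hy
  simp [rsInsert, this]

theorem rsInsert_bump (A B : List ℕ) (a x : ℕ) (T : List (List ℕ)) (hA : ∀ y ∈ A, y ≤ x)
    (hx : x < a) :
    rsInsert ((A ++ a :: B) :: T) x = (A ++ x :: B) :: rsInsert T a := by
  have h0 : A.findIdx? (fun b => decide (x < b)) = none := by
    rw [List.findIdx?_eq_none_iff]
    intro y hy
    simpa using hA y hy
  have : (A ++ a :: B).findIdx? (fun b => decide (x < b)) = some A.length := by
    rw [List.findIdx?_append, h0]
    simp [List.findIdx?_cons, hx]
  simp [rsInsert, this]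

/-- Inserting into a single column an entry smaller than all of it pushes the column down. -/
theorem rsInsert_column (C : List ℕ) (x : ℕ) (h : (x :: C).Pairwise (· < ·)) :
    rsInsert (C.map fun y => [y]) x = (x :: C).map fun y => [y] := by
  induction C generalizing x with
  | nil => simp [rsInsert]
  | cons a C ih =>
    rw [List.pairwise_cons] at h
    have := rsInsert_bump [] [] a x (C.map fun y => [y]) (by simp) (h.1 a (by simp))
    simp only [List.nil_append] at this
    rw [List.map_cons, this, ih a h.2]
    simp

theorem foldl_increasing (L r : List ℕ) (h : (r ++ L).Pairwise (· < ·)) :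
    L.foldl rsInsert [r] = [r ++ L] := by
  induction L generalizing r with
  | nil => simp
  | cons x L ih =>
    have hr : ∀ y ∈ r, y ≤ x := fun y hy =>
      ((List.pairwise_append.1 h).2.2 y hy x (by simp)).le
    rw [List.foldl_cons, rsInsert_append r [] x hr, ih (r ++ [x]) (by simpa using h)]
    simp

/-- A decreasing run `L` whose entries all bump the same cell of the first row (initially holding
`a`) lengthens the first column of a hook tableau by `L.length` cells. The column `C` below the
first row is kept increasing and above the entry of the bumped cell. -/
theorem foldl_bump (A B L : List ℕ) (a : ℕ) (C : List ℕ) (hC : (a :: C).Pairwise (· < ·))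
    (hL : (a :: L).Pairwise (· > ·)) (hA : ∀ y ∈ A, ∀ x ∈ L, y ≤ x) :
    ∃ a' C', L.foldl rsInsert ((A ++ a :: B) :: C.map fun y => [y]) =
        (A ++ a' :: B) :: C'.map (fun y => [y]) ∧
      (a' :: C').Pairwise (· < ·) ∧ C'.length = C.length + L.length ∧ a' ∈ a :: L := by
  induction L generalizing a C with
  | nil => exact ⟨a, C, by simp, hC, by simp, by simp⟩
  | cons x L ih =>
    rw [List.pairwise_cons] at hL
    have hx : x < a := hL.1 x (by simp)
    have hxC : (x :: a :: C).Pairwise (· < ·) := by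
      rw [List.pairwise_cons]
      refine ⟨fun y hy => ?_, hC⟩
      rcases List.mem_cons.1 hy with rfl | hy
      · exact hx
      · exact hx.trans ((List.pairwise_cons.1 hC).1 y hy)
    obtain ⟨a', C', h1, h2, h3, h4⟩ := ih x (a :: C) hxC hL.2
      (fun y hy z hz => hA y hy z (List.mem_cons_of_mem _ hz))
    refine ⟨a', C', ?_, h2, ?_, List.mem_cons_of_mem _ h4⟩
    · rw [List.foldl_cons, rsInsert_bump A B a x _ (fun y hy => hA y hy x (by simp)) hx,
        rsInsert_column C a hC, h1]
    · simp only [List.length_cons] at h3 ⊢; omega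

theorem B_shape (m n : ℕ) (hm : 1 < m) (hn : m < n) :
    rskShape (Bseq m n) = m :: List.replicate (n - m) 1 := by
  set c := (n + m) / 2 with hc
  obtain ⟨t, ht⟩ : ∃ t, n - c = t + 1 := ⟨n - c - 1, by omega⟩
  have hB : Bseq m n = (List.range' 2 (m - 2) ++ [c] ++ [n]) ++
      ((List.range' (c + 1) t).reverse ++ ((List.range' m (c - m)).reverse ++ [1])) := by
    rw [Bseq_eq m n hm hn, ← hc, ht, List.range'_concat]
    have : c + 1 + t = n := by omega
    simp [this]
  have h0 : (List.range' 2 (m - 2) ++ [c] ++ [n]).foldl rsInsert [] =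
      [(List.range' 2 (m - 2) ++ [c]) ++ n :: []] := by
    have hp : (List.range' 2 (m - 2) ++ [c] ++ [n]).Pairwise (· < ·) := by
      simp only [List.pairwise_append, List.pairwise_singleton, List.mem_append,
        List.mem_singleton, List.mem_range'_1]
      refine ⟨⟨List.pairwise_lt_range', trivial, ?_⟩, trivial, ?_⟩
      · intro a ha b hb; omega
      · intro a ha b hb; omega
    generalize List.range' 2 (m - 2) ++ [c] = r at hp
    cases r with
    | nil => simp [rsInsert]
    | cons x r =>
      have := foldl_increasing (r ++ [n]) [x] (by simpa using hp)
      simpa [rsInsert] using this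
  -- The run `n−1,…,c+1` bumps the last cell.
  obtain ⟨b, C₁, h1, hC₁, hl₁, hb⟩ := foldl_bump (List.range' 2 (m - 2) ++ [c]) []
    (List.range' (c + 1) t).reverse n [] (by simp)
    (by
      rw [List.pairwise_cons]
      refine ⟨fun y hy => ?_, List.pairwise_reverse.2 List.pairwise_lt_range'⟩
      simp at hy; omega)
    (by
      intro y hy x hx
      simp at hy hx; omega)
  have hbc : c < b := by
    simp at hb; omega
  -- The run `c−1,…,m` bumps the cell holding `c`.
  obtain ⟨a, C₂, h2, hC₂, hl₂, ha⟩ := foldl_bump (List.range' 2 (m - 2)) [b]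
    (List.range' m (c - m)).reverse c C₁
    (by
      rw [List.pairwise_cons] at hC₁ ⊢
      exact ⟨fun y hy => hbc.trans (hC₁.1 y hy), hC₁.2⟩)
    (by
      rw [List.pairwise_cons]
      refine ⟨fun y hy => ?_, List.pairwise_reverse.2 List.pairwise_lt_range'⟩
      simp at hy; omega)
    (by
      intro y hy x hx
      simp at hy hx; omega)
  have ham : m ≤ a := by
    simp at ha; omega
  -- The final `1` bumps the first cell, which holds `2` if `m > 2` and `a` if `m = 2`.
  obtain ⟨d, B, hdB, hd1, hda⟩ : ∃ d B, List.range' 2 (m - 2) ++ a :: [b] = d :: B ∧ 1 < d ∧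
      d ≤ a := by
    obtain ⟨k, rfl⟩ : ∃ k, m = k + 2 := ⟨m - 2, by omega⟩
    cases k with
    | zero => exact ⟨a, [b], by simp, by omega, le_rfl⟩
    | succ k => exact ⟨2, List.range' 3 k ++ [a, b], by simp [List.range'_succ], by omega, by omega⟩
  obtain ⟨d', C₃, h3, -, hl₃, -⟩ := foldl_bump [] B [1] d C₂
    (by
      rw [List.pairwise_cons] at hC₂ ⊢
      exact ⟨fun y hy => hda.trans_lt (hC₂.1 y hy), hC₂.2⟩)
    (by simpa using hd1) (by simp)
  have hBl : B.length + 1 = m := by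
    have := congrArg List.length hdB
    simp at this; omega
  have hfin : rsTableau (Bseq m n) = (d' :: B) :: C₃.map (fun y => [y]) := by
    unfold rsTableau
    rw [hB, List.foldl_append, h0, List.foldl_append]
    simp only [List.map_nil] at h1
    rw [h1, List.foldl_append]
    have e : List.range' 2 (m - 2) ++ [c] ++ [b] = List.range' 2 (m - 2) ++ c :: [b] := by simp
    rw [e, h2, hdB]
    simpa using h3
  have hl : C₃.length = n - m := by
    simp at hl₁ hl₂ hl₃; omega
  rw [rskShape, hfin]
  simp [hBl, ← hl, Function.comp_def]

/-- for `1 < m < n`, `B(m,n)` is a cyclic permutation (an `n`-cycle)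
and its RSK shape is the hook `(m, 1^{n−m})`. -/
theorem stmt_4 (m n : ℕ) (hm : 1 < m) (hn : m < n) :
    (∃ π : Equiv.Perm (Fin n), seqOfPerm π = Bseq m n ∧ fullCycleType π = {n}) ∧
    rskShape (Bseq m n) = m :: List.replicate (n - m) 1 :=
  ⟨B_cyclic m n hm hn, B_shape m n hm hn⟩
end

section
/- For any two integers 1 < m ≤ n/2, the sequence B'(m,n) = (⌈(n+m)/2⌉) ⊕ I(L(m−1)) ⊕ (1) ⊕ I^m(L(n−m)) ⊕ (⌊m/2⌋+1) is a permutation of {1, 2, …, n} of length n (every integer from 1 to n appears exactly once). -/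
/-- `B'(m,n) = (⌈(n+m)/2⌉) ⊕ I(L(m−1)) ⊕ (1) ⊕ I^m(L(n−m)) ⊕ (⌊m/2⌋+1)`. -/
def B'seq (m n : ℕ) : List ℕ :=
  [(n + m + 1) / 2] ++ (Lseq (m - 1)).map (· + 1) ++ [1] ++ (Lseq (n - m)).map (· + m)
    ++ [m / 2 + 1]

/-- `L(k)` with its omitted entry restored is a permutation of `{1,…,k}`. Positivity of `k` is
needed since `L(0)` is empty and omits nothing. -/
lemma cons_Lseq_perm {k : ℕ} (hk : 1 ≤ k) :
    ((k + 1) / 2 :: Lseq k).Perm (List.range' 1 k) := by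
  have hmem : (k + 1) / 2 ∈ List.range' 1 k := by
    rw [List.mem_range'_1]; omega
  have hfilter : (Lseq k).Perm ((List.range' 1 k).erase ((k + 1) / 2)) := by
    rw [List.Nodup.erase_eq_filter List.nodup_range']
    convert (List.reverse_perm (List.range' 1 k)).filter (fun x => decide (x ≠ (k + 1) / 2))
      using 2
    · simp [Lseq]
    · grind
  exact (hfilter.cons _).trans (List.perm_cons_erase hmem).symm

/-- Shifting by `j`, the completed `I^j(L(k))` is a permutation of `{j+1,…,j+k}`. -/
lemma cons_shift_Lseq_perm {k : ℕ} (hk : 1 ≤ k) (j : ℕ) :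
    (((k + 1) / 2 + j) :: (Lseq k).map (· + j)).Perm (List.range' (j + 1) k) := by
  have h := (cons_Lseq_perm hk).map (· + j)
  have hr : (List.range' 1 k).map (· + j) = List.range' (j + 1) k := by
    simp only [Nat.add_comm _ j]
    exact List.map_add_range' ..
  rwa [hr] at h

/-- for `1 < m ≤ n/2`, `B'(m,n)` is a permutation of `{1,…,n}`. -/
theorem stmt_5 (m n : ℕ) (hm : 1 < m) (hn : 2 * m ≤ n) :
    (B'seq m n).Perm (List.range' 1 n) := by
  have h1 := cons_shift_Lseq_perm (k := m - 1) (by omega) 1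
  have h2 := cons_shift_Lseq_perm (k := n - m) (by omega) m
  rw [show (m - 1 + 1) / 2 + 1 = m / 2 + 1 by omega] at h1
  rw [show (n - m + 1) / 2 + m = (n + m + 1) / 2 by omega] at h2
  have hsplit : List.range' 1 n =
      1 :: (List.range' (1 + 1) (m - 1) ++ List.range' (m + 1) (n - m)) := by
    rw [show m + 1 = 1 + 1 + (m - 1) by omega, List.range'_append_1, ← List.range'_succ]
    congr 1
    omega
  rw [hsplit]
  refine List.Perm.trans ?_ ((h1.append h2).cons 1)
  rw [List.perm_iff_count]
  intro a
  simp only [B'seq, List.count_append, List.count_cons, List.count_nil]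
  omega
end

section
/- Let t ≥ 1 and n > 1 be integers, and let σ = (t) ⊕ L'(n), a sequence of length n. Consider the directed graph G on vertex set V = {1, 2, …, n} with edge set E = {(i, σ_i) : 1 < i ≤ n}. Then G consists of exactly one self-loop (i.e., there is exactly one vertex v with 1 < v ≤ n and σ_v = v) together with a directed path that visits each of the remaining n−1 vertices exactly once. -/
/-- The entries of the decreasing sequence `n, …, 1` with `w` omitted, at all `0`-based
indices `j`: past the end of the list both sides are `0`. The case `n < w`, where nothing is
omitted, is needed for the induction on `n`. -/
theorem getD_filter_ne (w n j : ℕ) :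
    (((List.range' 1 n).reverse).filter (fun x => decide (x ≠ w))).getD j 0 =
      if w < n - j ∨ n < w then n - j else n - 1 - j := by
  induction n generalizing j with
  | zero => simp
  | succ n ih =>
    rw [List.range'_concat, List.reverse_append]
    simp only [List.reverse_singleton, List.singleton_append, List.filter_cons]
    by_cases h : 1 + 1 * n = w
    · simp only [h, ne_eq, not_true_eq_false, decide_false, Bool.false_eq_true, if_false]
      have := ih j
      simp only [ne_eq] at this
      rw [this]
      split_ifs <;> omega
    · simp only [ne_eq, h, not_false_eq_true, decide_true, if_true]
      cases j with
      | zero => simp only [List.getD_cons_zero]; split_ifs <;> omega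
      | succ j =>
        have := ih j
        simp only [ne_eq] at this
        rw [List.getD_cons_succ, this]
        split_ifs <;> omega

/-- The value `σ_v` for `v ≥ 2`; it does not depend on the first entry `t`. -/
theorem sigma_eq (t n v : ℕ) (hn : 1 < n) (hv : 1 < v) :
    (t :: L'seq n).getD (v - 1) 0 =
      if wval n < n + 2 - v then n + 2 - v else n + 1 - v := by
  obtain ⟨k, rfl⟩ : ∃ k, v = k + 2 := ⟨v - 2, by omega⟩
  have hw : 1 ≤ wval n ∧ wval n ≤ n := by unfold wval; split_ifs <;> omega
  have h := getD_filter_ne (wval n) n k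
  rw [show k + 2 - 1 = k + 1 by omega, List.getD_cons_succ, L'seq, h]
  split_ifs <;> omega

theorem sigma_fixed_iff (t n v : ℕ) (hn : 1 < n) (hv : 1 < v) (hvn : v ≤ n) :
    (t :: L'seq n).getD (v - 1) 0 = v ↔ v = n / 2 + 1 := by
  rw [sigma_eq t n v hn hv, wval]
  split_ifs <;> omega

/-- The `j`-th vertex (from `0`) of the path: it starts at `w` and alternates between the two
sides of the fixed point `n / 2 + 1`, moving one step outwards each time. -/
def spiral (n j : ℕ) : ℕ :=
  if (n + j) % 2 = 0 then n / 2 - j / 2 else n / 2 + 2 + j / 2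

/-- for `σ = (t) ⊕ L'(n)`, the directed graph on `{1,…,n}` with edges
`(i, σ_i)` for `1 < i ≤ n` consists of exactly one self-loop together with a directed
path visiting each of the remaining `n−1` vertices exactly once. -/
theorem stmt_11 (t n : ℕ) (ht : 1 ≤ t) (hn : 1 < n) :
    (∃! v : ℕ, 1 < v ∧ v ≤ n ∧ (t :: L'seq n).getD (v - 1) 0 = v) ∧
    ∀ v : ℕ, 1 < v → v ≤ n → (t :: L'seq n).getD (v - 1) 0 = v →
      ∃ u : List ℕ,
        u.Perm ((List.range' 1 n).filter (fun x => decide (x ≠ v))) ∧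
        u.Chain' (fun a b => 1 < a ∧ (t :: L'seq n).getD (a - 1) 0 = b) := by
  refine ⟨⟨n / 2 + 1, ⟨by omega, by omega, ?_⟩, ?_⟩, ?_⟩
  · exact (sigma_fixed_iff t n _ hn (by omega) (by omega)).2 rfl
  · rintro v ⟨h1, h2, h3⟩
    exact (sigma_fixed_iff t n v hn h1 h2).1 h3
  · intro v h1 h2 h3
    obtain rfl := (sigma_fixed_iff t n v hn h1 h2).1 h3
    refine ⟨(List.range (n - 1)).map (spiral n), ?_, ?_⟩
    · rw [List.perm_ext_iff_of_nodup]
      · intro a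
        simp only [List.mem_map, List.mem_range, List.mem_filter, List.mem_range'_1,
          decide_eq_true_eq]
        constructor
        · rintro ⟨j, hj, rfl⟩
          unfold spiral
          split_ifs <;> omega
        · rintro ⟨ha, hne⟩
          -- Invert `spiral`: the parity of the index is determined by the side `a` lies on.
          by_cases hlt : a < n / 2 + 1
          · refine ⟨2 * (n / 2 - a) + n % 2, by omega, ?_⟩
            unfold spiral
            split_ifs <;> omega
          · refine ⟨2 * (a - (n / 2 + 2)) + (1 - n % 2), by omega, ?_⟩
            unfold spiral
            split_ifs <;> omega
      · refine List.Nodup.map_on ?_ List.nodup_range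
        intro x hx y hy h
        rw [List.mem_range] at hx hy
        unfold spiral at h
        split_ifs at h <;> omega
      · exact (List.nodup_range' (step := 1)).filter _
    · refine List.isChain_iff_getElem.2 ?_
      intro i hi
      simp only [List.length_map, List.length_range] at hi
      simp only [List.getElem_map, List.getElem_range]
      have hgt : 1 < spiral n i := by unfold spiral; split_ifs <;> omega
      refine ⟨hgt, ?_⟩
      rw [sigma_eq t n _ hn hgt]
      unfold spiral wval
      split_ifs <;> omega
end

section
/- For any two integers m, n with 1 < m ≤ n/2 and (m,n) ≠ (2,4), the sequence D(m,n) = (⌈(n+m)/2⌉) ⊕ L'(m) ⊕ I^m(L(n−m)) ⊕ (w), where w = ⌊m/2⌋ + 2p with p = 1 if m is odd and p = 0 if m is even, is a permutation of {1, 2, …, n} of length n (every integer from 1 to n appears exactly once). -/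
/-- `D(m,n) = (⌈(n+m)/2⌉) ⊕ L'(m) ⊕ I^m(L(n−m)) ⊕ (w)`. -/
def Dseq (m n : ℕ) : List ℕ :=
  [(n + m + 1) / 2] ++ L'seq m ++ (Lseq (n - m)).map (· + m) ++ [wval m]

/-- Putting an omitted value `a ∈ {1,…,k}` back in front of the decreasing list `k,…,1` without `a`
gives a rearrangement of `1,…,k`. -/
theorem cons_filter_ne_perm (k a : ℕ) (h1 : 1 ≤ a) (h2 : a ≤ k) :
    (a :: ((List.range' 1 k).reverse).filter (fun x => decide (x ≠ a))).Perm
      (List.range' 1 k) := by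
  rw [List.perm_ext_iff_of_nodup]
  · intro x
    simp only [List.mem_cons, List.mem_filter, List.mem_reverse, List.mem_range'_1,
      decide_eq_true_eq]
    omega
  · rw [List.nodup_cons]
    exact ⟨by simp, (List.nodup_reverse.2 List.nodup_range').filter _⟩
  · exact List.nodup_range'

/-- for `1 < m ≤ n/2` with `(m,n) ≠ (2,4)`, `D(m,n)` is a
permutation of `{1,…,n}`. -/
theorem stmt_12 (m n : ℕ) (hm : 1 < m) (hn : 2 * m ≤ n) (hne : ¬(m = 2 ∧ n = 4)) :
    (Dseq m n).Perm (List.range' 1 n) := by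
  have hw : 1 ≤ wval m ∧ wval m ≤ m := by unfold wval; split_ifs <;> omega
  have hlow : (wval m :: L'seq m).Perm (List.range' 1 m) :=
    cons_filter_ne_perm m (wval m) hw.1 hw.2
  have hhigh : ((n - m + 1) / 2 :: Lseq (n - m)).Perm (List.range' 1 (n - m)) :=
    cons_filter_ne_perm (n - m) _ (by omega) (by omega)
  have hfirst : (n + m + 1) / 2 = (n - m + 1) / 2 + m := by omega
  have hsplit : List.range' 1 n =
      List.range' 1 m ++ (List.range' 1 (n - m)).map (· + m) := by
    have h := List.range'_append_1 (s := 1) (m := m) (n := n - m)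
    rw [show m + (n - m) = n by omega] at h
    rw [← h]
    simp only [Nat.add_comm _ m, List.map_add_range']
  rw [hsplit]
  refine List.Perm.trans ?_ (hlow.append (hhigh.map (· + m)))
  rw [Dseq, hfirst, List.perm_iff_count]
  intro x
  simp only [List.map_cons, List.count_append, List.count_cons, List.count_nil]
  omega
end

section
/- For any two integers m, n with 1 < m ≤ n/2 and (m,n) ≠ (2,4), the permutation D(m,n) = (⌈(n+m)/2⌉) ⊕ L'(m) ⊕ I^m(L(n−m)) ⊕ (w) of {1,…,n} is almost cyclic (its cycle type is (n−1,1)), and its RSK shape Γ(P(D(m,n))) consists of m rows of length 2 followed by n−2m rows of length 1, i.e., equals (2^m, 1^{n−2m}). -/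
/-! ### Row insertion of decreasing words -/

/-- Inserting a decreasing word whose letters all lie below the first entry of the first row: each
letter replaces the first entry and bumps it into the rows below. -/
theorem foldl_head (V : List ℕ) : ∀ (x : ℕ) (r : List ℕ) (T : List (List ℕ)),
    (x :: V).Pairwise (· > ·) →
    V.foldl rsInsert ((x :: r) :: T) =
      ((x :: V).getLast (by simp) :: r) :: (x :: V).dropLast.foldl rsInsert T := by
  induction V with
  | nil => intro x r T _; simp
  | cons y V ih =>
    intro x r T h
    have hy : y < x := by simp at h; exact h.1.1
    have h2 : (y :: V).Pairwise (· > ·) := (List.pairwise_cons.1 h).2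
    have e : rsInsert ((x :: r) :: T) y = (y :: r) :: rsInsert T x := by
      simp [rsInsert, List.findIdx?_cons, hy]
    rw [List.foldl_cons, e, ih y r _ h2]
    simp

/-- Inserting a decreasing word into a first row `[a, x]`, with all letters between `a` and `x`:
the second entry is replaced each time. -/
theorem foldl_second (V : List ℕ) : ∀ (a x : ℕ) (T : List (List ℕ)),
    (x :: V).Pairwise (· > ·) → (∀ y ∈ V, a < y) →
    V.foldl rsInsert ([a, x] :: T) =
      [a, (x :: V).getLast (by simp)] :: (x :: V).dropLast.foldl rsInsert T := by
  induction V with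
  | nil => intro a x T _ _; simp
  | cons y V ih =>
    intro a x T h ha
    have hy : y < x := by simp at h; exact h.1.1
    have hay : ¬ y < a := by have := ha y (by simp); omega
    have h2 : (y :: V).Pairwise (· > ·) := (List.pairwise_cons.1 h).2
    have e : rsInsert ([a, x] :: T) y = [a, y] :: rsInsert T x := by
      simp [rsInsert, List.findIdx?_cons, hy, hay]
    rw [List.foldl_cons, e, ih a y _ h2 (fun z hz => ha z (by simp [hz]))]
    simp

theorem tableau_append (X Y : List ℕ) (hX : X ≠ []) (hY : Y ≠ [])
    (pX : X.Pairwise (· > ·)) (pY : Y.Pairwise (· > ·)) (hlt : ∀ y ∈ Y, X.getLast hX < y) :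
    rsTableau (X ++ Y) = [X.getLast hX, Y.getLast hY] :: rsTableau (X.dropLast ++ Y.dropLast) := by
  obtain ⟨x, X, rfl⟩ := List.exists_cons_of_ne_nil hX
  obtain ⟨y, Y, rfl⟩ := List.exists_cons_of_ne_nil hY
  unfold rsTableau
  have e0 : rsInsert [] x = [[x]] := rfl
  have eX : (x :: X).foldl rsInsert [] =
      [(x :: X).getLast hX] :: (x :: X).dropLast.foldl rsInsert [] := by
    rw [List.foldl_cons, e0, foldl_head X x [] [] pX]
  rw [List.foldl_append, eX, List.foldl_cons, List.foldl_append]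
  have hy : ¬ y < (x :: X).getLast hX := by have := hlt y (by simp); omega
  have e : ∀ T, rsInsert ([(x :: X).getLast hX] :: T) y = [(x :: X).getLast hX, y] :: T := by
    intro T
    simp only [rsInsert, List.findIdx?_cons, hy]
    simp
  rw [e, foldl_second Y _ _ _ pY (fun z hz => hlt z (by simp [hz]))]

theorem shape_decreasing (k : ℕ) : ∀ Z : List ℕ, Z.length = k → Z.Pairwise (· > ·) →
    rskShape Z = List.replicate k 1 := by
  induction k with
  | zero =>
    intro Z h _
    simp [List.length_eq_zero_iff.1 h, rskShape, rsTableau]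
  | succ k ih =>
    intro Z h p
    obtain ⟨x, Z, rfl⟩ := List.exists_cons_of_length_eq_add_one h
    have h2 := ih (x :: Z).dropLast (by simpa using h) (p.sublist (List.dropLast_sublist _))
    unfold rskShape rsTableau at *
    have e0 : rsInsert [] x = [[x]] := rfl
    rw [List.foldl_cons, e0, foldl_head Z x [] [] p, List.map_cons, h2]
    simp [List.replicate_succ]

/-- Into a first row `[c, u]`, a decreasing word below `u` bumps a decreasing word: letters above
`c` act on the second entry, the later ones below `c` on the first. -/
theorem foldl_pair (Y : List ℕ) : ∀ (c u : ℕ) (T : List (List ℕ)), c < u → c ∉ Y →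
    (u :: Y).Pairwise (· > ·) →
    ∃ (p q : ℕ) (Z : List ℕ), Y.foldl rsInsert ([c, u] :: T) = [p, q] :: Z.foldl rsInsert T ∧
      Z.Pairwise (· > ·) ∧ Z.length = Y.length ∧ ∀ z ∈ Z, z ≤ u := by
  induction Y with
  | nil => intro c u T _ _ _; exact ⟨c, u, [], by simp⟩
  | cons y Y ih =>
    intro c u T hcu hc p
    have hy : y < u := by simp at p; exact p.1.1
    have h2 : (y :: Y).Pairwise (· > ·) := (List.pairwise_cons.1 p).2
    have hcy : c ≠ y := by rintro rfl; simp at hc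
    rcases lt_or_gt_of_ne hcy with h | h
    · have e : rsInsert ([c, u] :: T) y = [c, y] :: rsInsert T u := by
        have hyc : ¬ y < c := by omega
        simp [rsInsert, List.findIdx?_cons, hy, hyc]
      obtain ⟨p', q', Z, e1, e2, e3, e4⟩ := ih c y (rsInsert T u) h (by simp at hc; exact hc.2) h2
      refine ⟨p', q', u :: Z, by rw [List.foldl_cons, e, e1]; rfl, ?_, by simp [e3], ?_⟩
      · rw [List.pairwise_cons]
        exact ⟨fun z hz => by have := e4 z hz; omega, e2⟩
      · intro z hz
        rcases List.mem_cons.1 hz with rfl | hz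
        · exact le_rfl
        · have := e4 z hz; omega
    · have h3 : (c :: y :: Y).Pairwise (· > ·) := by
        refine List.pairwise_cons.2 ⟨fun z hz => ?_, h2⟩
        rcases List.mem_cons.1 hz with rfl | hz
        · exact h
        · have := (List.pairwise_cons.1 h2).1 z hz
          omega
      refine ⟨_, _, _, foldl_head (y :: Y) c [u] T h3, h3.sublist (List.dropLast_sublist _),
        by simp, fun z hz => ?_⟩
      rcases List.mem_cons.1 (List.mem_of_mem_dropLast hz) with rfl | hz
      · omega
      · have := (List.pairwise_cons.1 p).1 z hz
        omega

theorem shape_cons (c u : ℕ) (Y : List ℕ) (hcu : c < u) (hc : c ∉ Y)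
    (p : (u :: Y).Pairwise (· > ·)) :
    rskShape (c :: u :: Y) = 2 :: List.replicate Y.length 1 := by
  obtain ⟨p', q', Z, e1, e2, e3, -⟩ := foldl_pair Y c u [] hcu hc p
  have h := shape_decreasing _ Z e3 e2
  have e : rsInsert (rsInsert [] c) u = [[c, u]] := by
    have huc : ¬ u < c := by omega
    simp [rsInsert, List.findIdx?_cons, huc]
  unfold rskShape rsTableau at *
  rw [List.foldl_cons, List.foldl_cons, e, e1, List.map_cons, h]
  rfl

/-- Peeling off the rows of length two created by the letters of `A`. -/
theorem shape_peel (c : ℕ) (A : List ℕ) : ∀ Y : List ℕ, A.length ≤ Y.length →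
    (c :: A).Pairwise (· > ·) → Y.Pairwise (· > ·) → (∀ a ∈ A, ∀ y ∈ Y, a < y) →
    rskShape (c :: A ++ Y) =
      List.replicate A.length 2 ++ rskShape (c :: Y.take (Y.length - A.length)) := by
  induction A using List.reverseRecOn with
  | nil => intro Y _ _ _ _; simp
  | append_singleton A a ih =>
    intro Y hl pA pY hlt
    have hY : Y ≠ [] := by rintro rfl; simp at hl
    have h := tableau_append (c :: (A ++ [a])) Y (by simp) hY pA pY
      (fun y hy => by simpa using hlt a (by simp) y hy)
    have d : (c :: (A ++ [a])).dropLast = c :: A := by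
      rw [← List.cons_append, List.dropLast_concat]
    rw [d] at h
    have hlen : A.length + 1 ≤ Y.length := by simpa using hl
    have h2 := ih Y.dropLast (by simp; omega)
      (pA.sublist (by simp))
      (pY.sublist (List.dropLast_sublist _))
      (fun b hb y hy => hlt b (by simp [hb]) y (List.mem_of_mem_dropLast hy))
    have et : Y.dropLast.take (Y.dropLast.length - A.length)
        = Y.take (Y.length - (A ++ [a]).length) := by
      rw [List.dropLast_eq_take, List.take_take]
      congr 1
      simp
      omega
    rw [et] at h2
    have e : rskShape (c :: (A ++ [a]) ++ Y) = 2 :: rskShape (c :: A ++ Y.dropLast) := by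
      simp only [rskShape, h, List.map_cons]
      rfl
    rw [e, h2]
    simp [List.replicate_succ]

/-! ### Decreasing words with one letter omitted -/

theorem filter_ne (n w : ℕ) (h1 : 1 ≤ w) (h2 : w ≤ n) :
    ((List.range' 1 n).reverse).filter (fun x => decide (x ≠ w)) =
      (List.range' (w + 1) (n - w)).reverse ++ (List.range' 1 (w - 1)).reverse := by
  have e : List.range' 1 n = List.range' 1 (w - 1) ++ (w :: List.range' (w + 1) (n - w)) := by
    have e1 : w :: List.range' (w + 1) (n - w) = List.range' (1 + (w - 1)) (n - w + 1) := by
      rw [List.range'_succ]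
      congr 1 <;> [omega; (congr 1; omega)]
    rw [e1, List.range'_append_1]
    congr 1
    omega
  rw [e]
  simp only [List.reverse_append, List.reverse_cons, List.filter_append]
  have a1 : List.filter (fun x => decide (x ≠ w)) (List.range' (w + 1) (n - w)).reverse
      = (List.range' (w + 1) (n - w)).reverse := by
    rw [List.filter_eq_self]
    intro a ha
    simp at ha ⊢
    omega
  have a2 : List.filter (fun x => decide (x ≠ w)) (List.range' 1 (w - 1)).reverse
      = (List.range' 1 (w - 1)).reverse := by
    rw [List.filter_eq_self]
    intro a ha
    simp at ha ⊢
    omega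
  rw [a1, a2]
  simp

theorem filter_pairwise (n : ℕ) (p : ℕ → Bool) :
    (((List.range' 1 n).reverse).filter p).Pairwise (· > ·) := by
  apply List.Pairwise.filter
  rw [List.pairwise_reverse]
  exact List.pairwise_lt_range'

theorem wval_bounds (m : ℕ) (hm : 1 < m) : 1 ≤ wval m ∧ wval m ≤ m := by
  unfold wval; split_ifs <;> omega

theorem L'seq_length (m : ℕ) (hm : 1 < m) : (L'seq m).length = m - 1 := by
  have := wval_bounds m hm
  rw [L'seq, filter_ne _ _ this.1 this.2]
  simp; omega

theorem Lseq_length (k : ℕ) (hk : 1 < k) : (Lseq k).length = k - 1 := by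
  rw [Lseq, filter_ne _ _ (by omega) (by omega)]
  simp; omega

theorem Lseq_cons (k : ℕ) (hk : 1 < k) : ∃ R, Lseq k = k :: R := by
  rw [Lseq, filter_ne _ _ (by omega) (by omega)]
  obtain ⟨j, hj⟩ : ∃ j, k - (k + 1) / 2 = j + 1 := ⟨k - (k + 1) / 2 - 1, by omega⟩
  rw [hj, List.range'_concat, List.reverse_append]
  have e : (k + 1) / 2 + 1 + 1 * j = k := by omega
  rw [e]
  exact ⟨_, rfl⟩

/-! ### The shape -/

theorem shape_D (m n : ℕ) (hm : 1 < m) (hn : 2 * m ≤ n) (hne : ¬(m = 2 ∧ n = 4)) :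
    rskShape (Dseq m n) = List.replicate m 2 ++ List.replicate (n - 2 * m) 1 := by
  obtain ⟨R, hR⟩ := Lseq_cons (n - m) (by omega)
  have hlB := Lseq_length (n - m) (by omega)
  have hlA := L'seq_length m hm
  have pA : (L'seq m).Pairwise (· > ·) := filter_pairwise _ _
  have pL : (Lseq (n - m)).Pairwise (· > ·) := filter_pairwise _ _
  have mA : ∀ a ∈ L'seq m, a ≤ m ∧ 1 ≤ a := by
    intro a ha
    simp [L'seq] at ha
    omega
  have mL : ∀ a ∈ Lseq (n - m), 1 ≤ a ∧ a ≠ (n - m + 1) / 2 := by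
    intro a ha
    simp [Lseq] at ha
    omega
  set B := (Lseq (n - m)).map (· + m) with hB
  have pB : B.Pairwise (· > ·) := by
    rw [hB, List.pairwise_map]
    exact pL.imp (fun h => by omega)
  have mB : ∀ b ∈ B, m < b ∧ b ≠ (n + m + 1) / 2 := by
    intro b hb
    rw [hB, List.mem_map] at hb
    obtain ⟨a, ha, rfl⟩ := hb
    have := mL a ha
    omega
  have hBl : B.length = n - m - 1 := by simp [hB, hlB]
  have hB0 : B ≠ [] := by rintro h; simp [h] at hBl; omega
  have hBR : B = n :: R.map (· + m) := by
    rw [hB, hR, List.map_cons]; congr 1; omega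
  generalize hc : (n + m + 1) / 2 = c at *
  have hcm : m < c := by omega
  have hcn : c < n := by omega
  have pcA : (c :: L'seq m).Pairwise (· > ·) :=
    List.pairwise_cons.2 ⟨fun a ha => by have := mA a ha; omega, pA⟩
  have hD : Dseq m n = (c :: L'seq m) ++ B ++ [wval m] := by
    rw [Dseq, hc]; simp [hB]
  have hA0 : L'seq m ≠ [] := by rintro h; simp [h] at hlA; omega
  have glA : (c :: L'seq m).getLast (by simp) = (L'seq m).getLast hA0 := List.getLast_cons hA0
  have hT := tableau_append (c :: L'seq m) B (by simp) hB0 pcA pB (fun y hy => by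
    rw [glA]
    have := mA _ (List.getLast_mem hA0)
    have := mB y hy
    omega)
  have hgB : m < B.getLast hB0 := (mB _ (List.getLast_mem hB0)).1
  -- The word left over after peeling starts with `c, n` and decreases from `n` on.
  have fin : ∀ Y' : List ℕ, c ∉ Y' → (n :: Y').Pairwise (· > ·) →
      rskShape (c :: n :: Y') = 2 :: List.replicate Y'.length 1 :=
    fun Y' h p => shape_cons c n Y' hcn h p
  have hTw : rsTableau (Dseq m n) = rsInsert (rsTableau (c :: L'seq m ++ B)) (wval m) := by
    rw [hD, rsTableau, List.foldl_append]; rfl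
  rw [hT] at hTw
  have snoc : ∀ (s : List ℕ) (x : ℕ), rsInsert (rsTableau s) x = rsTableau (s ++ [x]) := by
    intro s x
    rw [rsTableau, rsTableau, List.foldl_append]; rfl
  by_cases h2 : m = 2
  · subst h2
    -- Here `w = 1` is smaller than every other letter, so it bumps the first entry `2`.
    have hA : L'seq 2 = [2] := by decide
    have hw : wval 2 = 1 := by decide
    have hT2 : rsTableau (Dseq 2 n) =
        [1, B.getLast hB0] :: rsTableau (c :: (B.dropLast ++ [2])) := by
      rw [hTw]
      simp only [hA, hw]
      simp [rsInsert, List.findIdx?_cons, snoc]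
    -- This is where `(m, n) = (2, 4)` has to be excluded: `B` needs a letter besides `n`.
    have hR0 : R.map (· + 2) ≠ [] := by
      intro h
      rw [hBR, h] at hBl
      simp at hBl
      omega
    have hd : B.dropLast = n :: (R.map (· + 2)).dropLast := by
      rw [hBR, List.dropLast_cons_of_ne_nil hR0]
    have hmem : ∀ z ∈ B.dropLast, 2 < z ∧ z ≠ c := fun z hz => mB z (List.mem_of_mem_dropLast hz)
    have pp : (B.dropLast ++ [2]).Pairwise (· > ·) := by
      rw [List.pairwise_append]
      refine ⟨pB.sublist (List.dropLast_sublist _), by simp, ?_⟩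
      intro z hz y hy
      simp at hy
      have := hmem z hz
      omega
    have hlen : (B.dropLast ++ [2]).length = n - 3 := by
      simp [hBl]; omega
    rw [hd] at pp hlen hmem
    have := fin ((R.map (· + 2)).dropLast ++ [2]) (by
      intro hmm
      rcases List.mem_append.1 hmm with h | h
      · exact (hmem c (by simp [h])).2 rfl
      · simp at h; omega) (by simpa using pp)
    have e : rskShape (Dseq 2 n) = 2 :: rskShape (c :: (B.dropLast ++ [2])) := by
      simp only [rskShape, hT2, List.map_cons]
      rfl
    rw [e, hd, List.cons_append, this]
    have hl : ((R.map (· + 2)).dropLast ++ [2]).length = n - 2 * 2 := by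
      rw [List.cons_append, List.length_cons] at hlen
      omega
    rw [hl]
    rfl
  · have hw : 1 < wval m ∧ wval m ≤ m := by
      unfold wval; split_ifs <;> omega
    have gl : (L'seq m).getLast hA0 < wval m := by
      have : (L'seq m).getLast hA0 = 1 := by
        obtain ⟨v, hv⟩ : ∃ v, wval m = v + 2 := ⟨wval m - 2, by omega⟩
        have e := filter_ne m (wval m) (by omega) hw.2
        have e2 : L'seq m = (List.range' (wval m + 1) (m - wval m)).reverse ++
            (List.range' 2 v).reverse ++ [1] := by
          rw [L'seq, e, hv]
          simp [List.range'_succ]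
        simp [e2]
      omega
    have hT2 : rsTableau (Dseq m n) = [(L'seq m).getLast hA0, wval m] ::
        rsTableau (c :: (L'seq m).dropLast ++ B) := by
      rw [hTw, glA, List.dropLast_cons_of_ne_nil hA0]
      have e : ∀ T, rsInsert ([(L'seq m).getLast hA0, B.getLast hB0] :: T) (wval m) =
          [(L'seq m).getLast hA0, wval m] :: rsInsert T (B.getLast hB0) := by
        intro T
        have h1 : ¬ wval m < (L'seq m).getLast hA0 := by omega
        have h2 : wval m < B.getLast hB0 := by omega
        simp [rsInsert, List.findIdx?_cons, h1, h2]
      rw [e, snoc, List.append_assoc, List.dropLast_append_getLast]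
    have e : rskShape (Dseq m n) = 2 :: rskShape (c :: (L'seq m).dropLast ++ B) := by
      simp only [rskShape, hT2, List.map_cons]
      rfl
    have hp := shape_peel c (L'seq m).dropLast B (by simp; omega)
      (pcA.sublist ((List.dropLast_sublist _).cons_cons c)) pB
      (fun a ha y hy => by
        have := mA a (List.mem_of_mem_dropLast ha)
        have := mB y hy
        omega)
    have hk : B.length - (L'seq m).dropLast.length = n - 2 * m + 1 := by
      simp; omega
    have hAl : (L'seq m).dropLast.length = m - 2 := by simp; omega
    have hRl : R.length = n - m - 2 := by
      rw [hBR] at hBl; simp at hBl; omega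
    have ht : B.take (n - 2 * m + 1) = n :: (R.map (· + m)).take (n - 2 * m) := by
      rw [hBR, List.take_succ_cons]
    have := fin ((R.map (· + m)).take (n - 2 * m))
      (fun h => (mB c (by rw [hBR]; exact List.mem_cons_of_mem _ (List.mem_of_mem_take h))).2 rfl)
      (by rw [← ht]; exact pB.sublist (List.take_sublist _ _))
    rw [e, hp, hk, hAl, ht, this]
    have hl : ((R.map (· + m)).take (n - 2 * m)).length = n - 2 * m := by
      simp; omega
    rw [hl]
    obtain ⟨j, rfl⟩ : ∃ j, m = j + 2 := ⟨m - 2, by omega⟩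
    simp only [Nat.add_sub_cancel]
    rw [List.replicate_succ, List.replicate_succ', List.cons_append, List.append_assoc]
    rfl

/-! ### The cycle type -/

/-- The word `D(m,n)` as a map on positions, with both positions and values counted from `0`.
Only its values at `x < n` are meaningful. -/
def dFun (m n x : ℕ) : ℕ :=
  if x = 0 then (n + m + 1) / 2 - 1
  else if x < m then (if x ≤ m - wval m then m - x else m - x - 1)
  else if x < n - 1 then
    (if x + 1 ≤ n - (n - m + 1) / 2 then n + m - 1 - x else n + m - 2 - x)
  else wval m - 1

theorem dFun_lt (m n x : ℕ) (hm : 1 < m) (hn : 2 * m ≤ n) (hx : x < n) : dFun m n x < n := by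
  have := wval_bounds m hm
  unfold dFun
  split_ifs <;> omega

theorem dFun_inj (m n x y : ℕ) (hm : 1 < m) (hn : 2 * m ≤ n) (hx : x < n) (hy : y < n)
    (h : dFun m n x = dFun m n y) : x = y := by
  have := wval_bounds m hm
  unfold dFun at h
  split_ifs at h <;> omega

theorem dFun_seq (m n : ℕ) (hm : 1 < m) (hn : 2 * m ≤ n) :
    List.ofFn (fun i : Fin n => dFun m n i + 1) = Dseq m n := by
  have hw := wval_bounds m hm
  have hlA := L'seq_length m hm
  have hlB := Lseq_length (n - m) (by omega)
  apply List.ext_getElem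
  · simp [Dseq, hlA, hlB]; omega
  · intro i h1 h2
    have hi : i < n := by simpa using h1
    have eA : L'seq m = _ := filter_ne m (wval m) hw.1 hw.2
    have eB : Lseq (n - m) = _ := filter_ne (n - m) ((n - m + 1) / 2) (by omega) (by omega)
    simp only [Dseq, eA, eB, List.getElem_ofFn, List.getElem_append, List.getElem_map,
      List.getElem_reverse, List.getElem_range', List.length_append, List.length_reverse,
      List.length_range', List.length_map, List.length_cons, List.length_nil, dFun,
      List.getElem_singleton]
    split_ifs <;> omega

/-- All positions except the fixed point `m / 2` (counted from `0`) lie in the orbit of the last. -/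
theorem sameCycle_D (m n : ℕ) (hm : 1 < m) (hn : 2 * m ≤ n) (hl : n - 1 < n)
    (π : Equiv.Perm (Fin n)) (hπ : ∀ i : Fin n, ((π i : Fin n) : ℕ) = dFun m n i)
    (x : Fin n) (hx : (x : ℕ) ≠ m / 2) : π.SameCycle x ⟨n - 1, hl⟩ := by
  have hw := wval_bounds m hm
  have hwv : 2 * wval m = m ∨ 2 * wval m = m + 3 := by
    unfold wval; split_ifs <;> omega
  have one : ∀ x y : Fin n, dFun m n x = y → π.SameCycle x y := by
    intro x y h
    refine ⟨1, ?_⟩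
    rw [zpow_one]
    exact Fin.ext ((hπ x).trans h)
  have two : ∀ (x y : Fin n) (z : ℕ), dFun m n x = z → dFun m n z = y → π.SameCycle x y := by
    intro x y z hz h
    refine ⟨2, ?_⟩
    apply Fin.ext
    rw [zpow_ofNat, pow_two, Equiv.Perm.mul_apply, hπ, hπ, hz, h]
  -- The lower half of the upper block descends to its bottom point `m`, which maps to `n - 1`.
  have upLow : ∀ d (h : m + d < n), m + d + 1 ≤ n - (n - m + 1) / 2 →
      π.SameCycle ⟨m + d, h⟩ ⟨n - 1, hl⟩ := by
    intro d
    induction d with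
    | zero =>
      intro h h'
      apply one
      simp only [dFun]
      split_ifs <;> omega
    | succ d ih =>
      intro h h'
      refine (two _ ⟨m + d, by omega⟩ (n - 2 - d) ?_ ?_).trans (ih (by omega) (by omega))
      all_goals
        simp only [dFun]
        split_ifs <;> first | contradiction | omega
  have upHigh : ∀ d (h : n - 1 - d < n), n - 1 - d + 1 > n - (n - m + 1) / 2 →
      π.SameCycle ⟨n - 1 - d, h⟩ ⟨n - 1, hl⟩ := by
    intro d
    induction d with
    | zero => intro h h'; exact Equiv.Perm.SameCycle.refl _ _
    | succ d ih =>
      intro h h'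
      refine (two _ ⟨n - 1 - d, by omega⟩ (m + d) ?_ ?_).trans (ih (by omega) (by omega))
      all_goals
        simp only [dFun]
        split_ifs <;> first | contradiction | omega
  have up : ∀ x (h : x < n), m ≤ x → π.SameCycle ⟨x, h⟩ ⟨n - 1, hl⟩ := by
    intro x h hx
    by_cases h' : x + 1 ≤ n - (n - m + 1) / 2
    · have := upLow (x - m) (by omega) (by omega)
      simpa only [Nat.add_sub_cancel' hx] using this
    · have := upHigh (n - 1 - x) (by omega) (by omega)
      have e : n - 1 - (n - 1 - x) = x := by omega
      simpa only [e] using this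
  have zero : π.SameCycle ⟨0, by omega⟩ ⟨n - 1, hl⟩ := by
    refine (one _ ⟨(n + m + 1) / 2 - 1, by omega⟩ ?_).trans (up _ _ (by omega))
    simp [dFun]
  -- In positions counted from `0`, the fixed point is `m / 2`.
  have loLow : ∀ x (h : x < n), x < m → x ≠ m / 2 → x ≤ m - wval m →
      π.SameCycle ⟨x, h⟩ ⟨n - 1, hl⟩ := by
    intro x
    induction x with
    | zero => intro h _ _ _; exact zero
    | succ x ih =>
      intro h h1 h2 h3
      refine (two _ ⟨x, by omega⟩ (m - x - 1) ?_ ?_).trans (ih (by omega) (by omega) (by omega) (by omega))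
      all_goals
        simp only [dFun]
        split_ifs <;> first | contradiction | omega
  have loHigh : ∀ d (h : m - 1 - d < n), m - 1 - d ≠ m / 2 → m - 1 - d > m - wval m →
      π.SameCycle ⟨m - 1 - d, h⟩ ⟨n - 1, hl⟩ := by
    intro d
    induction d with
    | zero =>
      intro h h1 h2
      refine (one _ ⟨0, by omega⟩ ?_).trans zero
      simp only [dFun]
      split_ifs <;> omega
    | succ d ih =>
      intro h h1 h2
      refine (two _ ⟨m - 1 - d, by omega⟩ (d + 1) ?_ ?_).trans (ih (by omega) (by omega) (by omega))
      all_goals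
        simp only [dFun]
        split_ifs <;> first | contradiction | omega
  obtain ⟨x, h⟩ := x
  replace hx : x ≠ m / 2 := hx
  by_cases h1 : m ≤ x
  · exact up x h h1
  · by_cases h2 : x ≤ m - wval m
    · exact loLow x h (by omega) hx h2
    · have e : m - 1 - (m - 1 - x) = x := by omega
      have := loHigh (m - 1 - x) (by omega) (by omega) (by omega)
      simpa only [e] using this

theorem cycle_D (m n : ℕ) (hm : 1 < m) (hn : 2 * m ≤ n) :
    ∃ π : Equiv.Perm (Fin n), seqOfPerm π = Dseq m n ∧ fullCycleType π = {n - 1, 1} := by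
  have hw := wval_bounds m hm
  have hwv : 2 * wval m = m ∨ 2 * wval m = m + 3 := by
    unfold wval; split_ifs <;> omega
  let f : Fin n → Fin n := fun i => ⟨dFun m n i, dFun_lt m n i hm hn i.2⟩
  have hf : Function.Bijective f := by
    rw [Fintype.bijective_iff_injective_and_card]
    refine ⟨fun a b h => ?_, rfl⟩
    exact Fin.ext (dFun_inj m n a b hm hn a.2 b.2 (congrArg Fin.val h))
  let π : Equiv.Perm (Fin n) := Equiv.ofBijective f hf
  have hπ : ∀ i : Fin n, ((π i : Fin n) : ℕ) = dFun m n i := fun i => rfl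
  refine ⟨π, ?_, ?_⟩
  · rw [← dFun_seq m n hm hn]; rfl
  have hl : n - 1 < n := by omega
  have all := sameCycle_D m n hm hn hl π hπ
  have fixq : dFun m n (m / 2) = m / 2 := by
    simp only [dFun]
    split_ifs <;> omega
  have nofix : ∀ x, x < n → dFun m n x = x → x = m / 2 := by
    intro x hx h
    simp only [dFun] at h
    split_ifs at h <;> omega
  have hcyc : π.IsCycle := by
    refine ⟨⟨n - 1, hl⟩, fun h => ?_, fun y hy => ?_⟩
    · have := nofix (n - 1) hl (congrArg Fin.val h)
      omega
    · refine (all y fun h => hy ?_).symm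
      apply Fin.ext
      rw [hπ, h, fixq]
  have hsupp : π.support = Finset.univ.erase ⟨m / 2, by omega⟩ := by
    ext y
    rw [Equiv.Perm.mem_support, Finset.mem_erase]
    constructor
    · intro h
      refine ⟨?_, Finset.mem_univ _⟩
      rintro rfl
      exact h (Fin.ext fixq)
    · rintro ⟨h, -⟩ h'
      exact h (Fin.ext (nofix y y.2 (congrArg Fin.val h')))
  have hcard : π.support.card = n - 1 := by
    rw [hsupp, Finset.card_erase_of_mem (Finset.mem_univ _), Finset.card_univ, Fintype.card_fin]
  rw [fullCycleType, hcyc.cycleType, hcard]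
  have : n - (n - 1) = 1 := by omega
  rw [this]
  rfl

/-- for `1 < m ≤ n/2` with `(m,n) ≠ (2,4)`, `D(m,n)` is an almost
cyclic permutation (cycle type `(n−1,1)`) and its RSK shape is `(2^m, 1^{n−2m})`. -/
theorem stmt_13 (m n : ℕ) (hm : 1 < m) (hn : 2 * m ≤ n) (hne : ¬(m = 2 ∧ n = 4)) :
    (∃ π : Equiv.Perm (Fin n), seqOfPerm π = Dseq m n ∧
       fullCycleType π = {n - 1, 1}) ∧
    rskShape (Dseq m n) = List.replicate m 2 ++ List.replicate (n - 2 * m) 1 :=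
  ⟨cycle_D m n hm hn, shape_D m n hm hn hne⟩
end

section
/- Let n ≥ 3 and let σ be a permutation of {1,…,n} whose RSK shape is Γ(P(σ)) = (n−1, 1). Then the cycle type of σ is (k, 1, 1, …, 1) for some integer 1 < k ≤ n; that is, σ consists of a single cycle of some length k > 1 together with n−k fixed points. -/
/-! ### Row insertion and increasing subsequences -/

/-- Every entry of `r`, in column `j`, ends a weakly increasing subsequence of `σ` of length
`j + 1`. Weak monotonicity makes the invariant independent of the distinctness of the entries. -/
def RowWitness (σ r : List ℕ) : Prop :=
  ∀ (j : ℕ) (hj : j < r.length), ∃ l : List ℕ,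
    (l ++ [r[j]]).Sublist σ ∧ l.length = j ∧ (l ++ [r[j]]).Pairwise (· ≤ ·)

/-- If all entries of `r` in columns before `i` are at most `x`, then appending `x` to `σ` gives an
increasing subsequence of length `i + 1` ending in `x`. -/
lemma RowWitness.exists_concat {σ r : List ℕ} (h : RowWitness σ r) (x i : ℕ) (hi : i ≤ r.length)
    (hx : ∀ (j : ℕ) (hj : j < r.length), j < i → r[j] ≤ x) :
    ∃ l : List ℕ, (l ++ [x]).Sublist (σ ++ [x]) ∧ l.length = i ∧
      (l ++ [x]).Pairwise (· ≤ ·) := by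
  rcases i with _ | i
  · exact ⟨[], by simp⟩
  · obtain ⟨l, hl, hlen, hs⟩ := h i (by omega)
    have hxi := hx i (by omega) (by omega)
    refine ⟨l ++ [r[i]], hl.append (List.Sublist.refl _), by simp [hlen], ?_⟩
    rw [List.pairwise_append] at hs ⊢
    refine ⟨List.pairwise_append.2 hs, by simp, ?_⟩
    intro y hy z hz
    simp only [List.mem_append, List.mem_singleton] at hy hz
    subst hz
    rcases hy with hy | rfl
    · exact (hs.2.2 y hy _ (by simp)).trans hxi
    · exact hxi

lemma RowWitness.mono {σ r : List ℕ} (h : RowWitness σ r) (x : ℕ) : RowWitness (σ ++ [x]) r := by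
  intro j hj
  obtain ⟨l, hl, h2⟩ := h j hj
  exact ⟨l, hl.trans (List.sublist_append_left _ _), h2⟩

lemma rowWitness_rsInsert {σ : List ℕ} {t : List (List ℕ)} (x : ℕ)
    (h : RowWitness σ (t.headD [])) : RowWitness (σ ++ [x]) ((rsInsert t x).headD []) := by
  rcases t with _ | ⟨r, rest⟩
  · intro j hj
    simp only [rsInsert, List.headD_cons, List.length_singleton] at hj ⊢
    obtain rfl : j = 0 := by omega
    exact ⟨[], by simp⟩
  · simp only [List.headD_cons] at h
    unfold rsInsert
    rcases hf : r.findIdx? (fun b => decide (x < b)) with _ | i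
    · simp only [List.findIdx?_eq_none_iff, decide_eq_false_iff_not, not_lt] at hf
      simp only [List.headD_cons]
      intro j hj
      rcases Nat.lt_or_ge j r.length with hjr | hjr
      · rw [List.getElem_append_left hjr]
        exact h.mono x j hjr
      · obtain rfl : j = r.length := by simp at hj; omega
        simpa using h.exists_concat x _ le_rfl fun j hj _ => hf _ (List.getElem_mem hj)
    · rw [List.findIdx?_eq_some_iff_getElem] at hf
      obtain ⟨hi, -, hlt⟩ := hf
      simp only [decide_eq_true_eq, not_lt] at hlt
      simp only [List.headD_cons]
      intro j hj
      rw [List.getElem_set]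
      split_ifs with hij
      · subst hij
        exact h.exists_concat x _ hi.le fun j _ hj => hlt j hj
      · exact h.mono x j (by simpa using hj)

lemma rowWitness_rsTableau (σ : List ℕ) : RowWitness σ ((rsTableau σ).headD []) := by
  induction σ using List.reverseRecOn with
  | nil => intro j hj; simp [rsTableau] at hj
  | append_singleton σ x ih =>
    have := rowWitness_rsInsert x ih
    simpa [rsTableau] using this

/-- The half of Schensted's theorem that is needed: the length of the first row is attained by an
increasing subsequence. -/
lemma exists_sublist_of_rskShape {σ : List ℕ} {m : ℕ} {s : List ℕ} (h : rskShape σ = m :: s) :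
    ∃ l : List ℕ, l.Sublist σ ∧ l.length = m ∧ l.Pairwise (· ≤ ·) := by
  unfold rskShape at h
  have hw := rowWitness_rsTableau σ
  rcases ht : rsTableau σ with _ | ⟨r, t⟩
  · simp [ht] at h
  · rw [ht] at h hw
    simp only [List.map_cons, List.cons.injEq] at h
    simp only [List.headD_cons] at hw
    rcases m with _ | m
    · exact ⟨[], by simp⟩
    · obtain ⟨l, hl, hlen, hs⟩ := hw m (by omega)
      exact ⟨_, hl, by simp [hlen], hs⟩

/-- A nonempty increasing sequence is its own insertion tableau, with a single row. -/
lemma rsTableau_eq_of_pairwise (σ : List ℕ) (hne : σ ≠ []) (h : σ.Pairwise (· ≤ ·)) :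
    rsTableau σ = [σ] := by
  induction σ using List.reverseRecOn with
  | nil => exact absurd rfl hne
  | append_singleton σ x ih =>
    rcases eq_or_ne σ [] with rfl | hσ
    · rfl
    · rw [List.pairwise_append] at h
      have ih := ih hσ h.1
      have hf : σ.findIdx? (fun b => decide (x < b)) = none := by
        simp only [List.findIdx?_eq_none_iff, decide_eq_false_iff_not, not_lt]
        exact fun y hy => h.2.2 y hy x (by simp)
      unfold rsTableau at ih ⊢
      rw [List.foldl_append, ih]
      simp [rsInsert, hf]

/-! ### Permutations that are increasing off one position -/

lemma strictMono_eq_succAbove {m : ℕ} (f : Fin m → Fin (m + 1)) (hf : StrictMono f) :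
    ∃ a : Fin (m + 1), f = a.succAbove := by
  have hcard : ((Finset.univ.image f)ᶜ).card = 1 := by
    rw [Finset.card_compl, Finset.card_image_of_injective _ hf.injective]
    simp
  obtain ⟨a, ha⟩ := Finset.card_eq_one.1 hcard
  refine ⟨a, (hf.range_inj (Fin.strictMono_succAbove a)).1 ?_⟩
  rw [Fin.range_succAbove]
  have h2 : Finset.univ.image f = {a}ᶜ := by rw [← ha, compl_compl]
  simpa using congrArg (fun s : Finset (Fin (m + 1)) => (s : Set (Fin (m + 1)))) h2

lemma perm_ext_of_comp_succAbove {m : ℕ} {p q : Equiv.Perm (Fin (m + 1))} {a : Fin (m + 1)}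
    (h : p ∘ a.succAbove = q ∘ a.succAbove) : p = q := by
  have hne : ∀ y, y ≠ a → p y = q y := by
    intro y hy
    obtain ⟨z, rfl⟩ := Fin.exists_succAbove_eq hy
    exact congrFun h z
  ext1 y
  rcases eq_or_ne y a with rfl | hy
  · -- The preimage of `p y` under `q` can only be the remaining point `y`.
    by_contra hc
    have hz : q.symm (p y) ≠ y := fun e => hc (by rw [Equiv.symm_apply_eq] at e; exact e)
    have := hne _ hz
    rw [Equiv.apply_symm_apply] at this
    exact hz (p.injective this)
  · exact hne y hy

lemma exists_comp_succAbove {m : ℕ} (π : Equiv.Perm (Fin (m + 1)))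
    (h : ∃ l : List ℕ, l.Sublist (seqOfPerm π) ∧ l.length = m ∧ l.Pairwise (· ≤ ·)) :
    ∃ a b : Fin (m + 1), π ∘ a.succAbove = b.succAbove := by
  obtain ⟨l, hl, hlen, hs⟩ := h
  subst hlen
  obtain ⟨f, hf⟩ := List.sublist_iff_exists_fin_orderEmbedding_get_eq.1 hl
  have hL : (seqOfPerm π).length = l.length + 1 := by simp [seqOfPerm]
  let g : Fin l.length → Fin (l.length + 1) := fun i => (f i).cast hL
  have hg : StrictMono g := fun i j hij => f.strictMono hij
  have hget : ∀ i, l.get i = (π (g i) : ℕ) + 1 := by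
    intro i
    rw [hf]
    simp only [seqOfPerm, List.get_eq_getElem, List.getElem_ofFn]
    rfl
  have hπg : StrictMono (π ∘ g) := by
    have hmono : Monotone (π ∘ g) := by
      intro i j hij
      rcases hij.eq_or_lt with rfl | hij
      · exact le_rfl
      · have := List.pairwise_iff_get.1 hs i j hij
        rw [hget, hget] at this
        exact Fin.le_def.2 (by simpa using this)
    exact hmono.strictMono_of_injective (π.injective.comp hg.injective)
  obtain ⟨a, ha⟩ := strictMono_eq_succAbove g hg
  obtain ⟨b, hb⟩ := strictMono_eq_succAbove _ hπg
  exact ⟨a, b, by rw [← ha, hb]⟩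

/-- Moving the entry at position `a` to another position `b` is a single cycle. -/
lemma exists_cycleType_eq_singleton {m : ℕ} {π : Equiv.Perm (Fin (m + 1))} {a b : Fin (m + 1)}
    (h : π ∘ a.succAbove = b.succAbove) (hab : a ≠ b) :
    ∃ k : ℕ, 1 < k ∧ π.cycleType = {k} := by
  rcases lt_or_gt_of_ne hab with hlt | hlt
  · have hinv : π⁻¹ = Fin.cycleIcc a b := by
      apply perm_ext_of_comp_succAbove (a := b)
      rw [Fin.cycleIcc_comp_succAbove a b hlt.le, ← h]
      ext i
      simp
    refine ⟨b - a + 1, ?_, ?_⟩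
    · have := Fin.lt_def.1 hlt
      omega
    · rw [← Equiv.Perm.cycleType_inv, hinv, Fin.cycleType_cycleIcc_of_lt hlt]
  · have heq : π = Fin.cycleIcc b a := by
      apply perm_ext_of_comp_succAbove (a := a)
      rw [Fin.cycleIcc_comp_succAbove b a hlt.le, h]
    refine ⟨a - b + 1, ?_, ?_⟩
    · have := Fin.lt_def.1 hlt
      omega
    · rw [heq, Fin.cycleType_cycleIcc_of_lt hlt]

lemma rskShape_seqOfPerm_one (m : ℕ) :
    rskShape (seqOfPerm (1 : Equiv.Perm (Fin (m + 1)))) = [m + 1] := by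
  unfold rskShape
  rw [rsTableau_eq_of_pairwise]
  · simp [seqOfPerm]
  · simp [seqOfPerm]
  · rw [seqOfPerm, List.pairwise_ofFn]
    intro i j hij
    have := Fin.lt_def.1 hij
    simp only [Equiv.Perm.coe_one, id_eq]
    omega

/-- any permutation of `{1,…,n}` with RSK shape `(n−1, 1)` has cycle
type `(k, 1, 1, …, 1)` for some `1 < k ≤ n`. -/
theorem stmt_16 (n : ℕ) (hn : 3 ≤ n) (π : Equiv.Perm (Fin n))
    (hshape : rskShape (seqOfPerm π) = [n - 1, 1]) :
    ∃ k : ℕ, 1 < k ∧ k ≤ n ∧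
      fullCycleType π = k ::ₘ Multiset.replicate (n - k) 1 := by
  obtain ⟨m, rfl⟩ : ∃ m, n = m + 1 := ⟨n - 1, by omega⟩
  rw [Nat.add_sub_cancel] at hshape
  obtain ⟨a, b, h⟩ := exists_comp_succAbove π (exists_sublist_of_rskShape hshape)
  have hab : a ≠ b := by
    rintro rfl
    obtain rfl : π = 1 := perm_ext_of_comp_succAbove (a := a) h
    rw [rskShape_seqOfPerm_one] at hshape
    simp at hshape
  obtain ⟨k, hk, hc⟩ := exists_cycleType_eq_singleton h hab
  have hsupp : π.support.card = k := by rw [← Equiv.Perm.sum_cycleType, hc]; simp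
  refine ⟨k, hk, ?_, ?_⟩
  · rw [← hsupp]
    simpa using Finset.card_le_univ π.support
  · rw [fullCycleType, hc, hsupp, Multiset.singleton_add]
end

section
/- Let σ be a permutation of {1,…,n} whose RSK shape Γ(P(σ)) = (γ_1, γ_2) has exactly two rows, and suppose σ has exactly r fixed points. Then γ_1 ≥ γ_2 + r. Equivalently (by Schensted's theorem, since γ_1 is the length λ of the longest increasing subsequence of σ and γ_2 = n − λ): if the longest decreasing subsequence of σ has length exactly 2 and σ has r fixed points, then 2λ ≥ n + r. -/
/-! ### Insertion with at most two rows -/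

/-- One row insertion of `x` into a tableau with rows `A`, `B` (possibly empty) that creates no
third row; the new rows are `A'`, `B'`. -/
inductive TwoRowStep (x : ℕ) : List ℕ → List ℕ → List ℕ → List ℕ → Prop
  | append (A B : List ℕ) (hA : ∀ a ∈ A, a ≤ x) : TwoRowStep x A B (A ++ [x]) B
  | bump (U V B : List ℕ) (b : ℕ) (hU : ∀ a ∈ U, a ≤ x) (hb : x < b) (hB : ∀ c ∈ B, c ≤ b) :
      TwoRowStep x (U ++ b :: V) B (U ++ x :: V) (B ++ [b])

lemma length_le_rsInsert (T : List (List ℕ)) (x : ℕ) : T.length ≤ (rsInsert T x).length := by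
  induction T generalizing x with
  | nil => simp
  | cons r rest ih =>
    unfold rsInsert
    split
    · simp
    · simpa using ih _

lemma length_le_foldl (R : List ℕ) (T : List (List ℕ)) :
    T.length ≤ (R.foldl rsInsert T).length := by
  induction R generalizing T with
  | nil => simp
  | cons y R ih => exact (length_le_rsInsert T y).trans (ih _)

lemma rsInsert_ne_nil (T : List (List ℕ)) (x : ℕ) : 1 ≤ (rsInsert T x).length := by
  cases T with
  | nil => simp [rsInsert]
  | cons r rest => exact le_trans (by simp) (length_le_rsInsert (r :: rest) x)

lemma rsInsert_cons_cases (A : List ℕ) (rest : List (List ℕ)) (x : ℕ) :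
    ((∀ a ∈ A, a ≤ x) ∧ rsInsert (A :: rest) x = (A ++ [x]) :: rest) ∨
    ∃ U b V, A = U ++ b :: V ∧ (∀ a ∈ U, a ≤ x) ∧ x < b ∧
      rsInsert (A :: rest) x = (U ++ x :: V) :: rsInsert rest b := by
  rw [rsInsert]
  split
  · rename_i h
    left
    simpa using h
  · rename_i i h
    right
    rw [List.findIdx?_eq_some_iff_getElem] at h
    obtain ⟨hi, hx, hj⟩ := h
    refine ⟨A.take i, A[i], A.drop (i + 1), by simp, ?_, by simpa using hx, ?_⟩
    · intro a ha
      obtain ⟨j, hj', rfl⟩ := List.mem_iff_getElem.1 ha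
      simp only [List.length_take] at hj'
      have := hj j (by omega)
      simpa using this
    · rw [List.set_eq_take_append_cons_drop, if_pos hi, List.getD_eq_getElem _ _ hi]

lemma twoRowStep_of_length (T : List (List ℕ)) (x : ℕ) (hT : (rsInsert T x).length ≤ 2) :
    TwoRowStep x (T.getD 0 []) (T.getD 1 []) ((rsInsert T x).getD 0 [])
      ((rsInsert T x).getD 1 []) := by
  match T with
  | [] => simpa [rsInsert] using TwoRowStep.append (x := x) [] [] (by simp)
  | A :: rest =>
    rcases rsInsert_cons_cases A rest x with ⟨hA, he⟩ | ⟨U, b, V, rfl, hU, hb, he⟩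
    · rw [he]
      simpa using TwoRowStep.append (x := x) A (rest.getD 0 []) hA
    · rw [he] at hT ⊢
      match rest with
      | [] => simpa [rsInsert] using TwoRowStep.bump (x := x) U V [] b hU hb (by simp)
      | B :: rest' =>
        rcases rsInsert_cons_cases B rest' b with ⟨hB, he'⟩ | ⟨U', b', V', rfl, hU', hb', he'⟩
        · rw [he']
          simpa using TwoRowStep.bump (x := x) U V B b hU hb hB
        · -- an entry bumped out of the second row would start a third one
          rw [he'] at hT
          have := rsInsert_ne_nil rest' b'
          simp only [List.length_cons] at hT
          omega

lemma TwoRowStep.perm {x : ℕ} {A B A' B' : List ℕ} (h : TwoRowStep x A B A' B') :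
    (A' ++ B').Perm ((A ++ B) ++ [x]) := by
  cases h <;>
  · rw [List.perm_iff_count]
    intro a
    simp only [List.count_append, List.count_cons, List.count_nil]
    omega

lemma TwoRowStep.sorted {x : ℕ} {A B A' B' : List ℕ} (h : TwoRowStep x A B A' B')
    (hA : A.Pairwise (· ≤ ·)) : A'.Pairwise (· ≤ ·) := by
  cases h with
  | append _ _ hx => exact List.pairwise_append.2 ⟨hA, by simp, by simpa using hx⟩
  | bump U V B b hU hb hB =>
    simp only [List.pairwise_append, List.pairwise_cons, List.mem_cons] at hA ⊢
    obtain ⟨h1, ⟨h2, h3⟩, h4⟩ := hA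
    refine ⟨h1, ⟨fun a ha => hb.le.trans (h2 a ha), h3⟩, ?_⟩
    rintro a ha c (rfl | hc)
    · exact hU a ha
    · exact h4 a ha c (Or.inr hc)

/-! ### Decreasing triples -/

/-- With `x` in the first row and a larger entry in the second, inserting an entry smaller than `x`
would create a third row, and so would bumping `x`. -/
lemma TwoRowStep.blocked {y : ℕ} {A B A' B' : List ℕ} (h : TwoRowStep y A B A' B')
    (hA : A.Pairwise (· ≤ ·)) {x a : ℕ} (hx : x ∈ A) (ha : a ∈ B) (hxa : x < a) :
    x ≤ y ∧ x ∈ A' ∧ a ∈ B' := by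
  cases h with
  | append _ _ hy => exact ⟨hy x hx, by simp [hx], ha⟩
  | bump U V B b hU hb hB =>
    have hab := hB a ha
    simp only [List.pairwise_append, List.pairwise_cons, List.mem_cons] at hA
    simp only [List.mem_append, List.mem_cons] at hx
    rcases hx with hx | rfl | hx
    · exact ⟨hU x hx, by simp [hx], by simp [ha]⟩
    · omega
    · have := hA.2.1.1 x hx
      omega

lemma future_ge (R : List ℕ) (T : List (List ℕ)) (hT : (R.foldl rsInsert T).length ≤ 2)
    (hA : (T.getD 0 []).Pairwise (· ≤ ·)) {x a : ℕ} (hx : x ∈ T.getD 0 [])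
    (ha : a ∈ T.getD 1 []) (hxa : x < a) : ∀ y ∈ R, x ≤ y := by
  induction R generalizing T with
  | nil => simp
  | cons y R ih =>
    have hs := twoRowStep_of_length T y ((length_le_foldl R _).trans hT)
    obtain ⟨h1, h2, h3⟩ := hs.blocked hA hx ha hxa
    intro z hz
    rcases List.mem_cons.1 hz with rfl | hz
    · exact h1
    · exact ih _ hT (hs.sorted hA) h2 h3 z hz

/-! ### Fixed points split the permutation -/

lemma countP_range'_lt (n i : ℕ) (hi : i ≤ n) :
    (List.range' 1 n).countP (fun y => decide (y < i + 1)) = i := by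
  obtain ⟨k, rfl⟩ := Nat.exists_eq_add_of_le hi
  rw [← List.range'_append_1, List.countP_append, List.countP_eq_length.2, List.countP_eq_zero.2]
  · simp
  · intro a ha
    simp only [List.mem_range'_1] at ha
    simp only [decide_eq_true_eq]
    omega
  · intro a ha
    simp only [List.mem_range'_1] at ha
    simp only [decide_eq_true_eq]
    omega

/-- A fixed point of a permutation has as many larger entries before it as smaller entries after
it; hence either both kinds occur or neither. -/
lemma fixed_split {n : ℕ} {L R : List ℕ}
    (h : (L ++ (L.length + 1) :: R).Perm (List.range' 1 n)) :
    (∀ y ∈ L, y ≤ L.length + 1) ↔ ∀ y ∈ R, L.length + 1 ≤ y := by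
  have hn : L.length ≤ n := by
    have := h.length_eq
    simp at this
    omega
  have hc := h.countP_eq (fun y => decide (y < L.length + 1))
  rw [countP_range'_lt n _ hn] at hc
  simp only [List.countP_append, List.countP_cons, lt_irrefl, decide_false,
    Bool.false_eq_true, if_false, add_zero] at hc
  have hnd : (L ++ (L.length + 1) :: R).Nodup := h.nodup_iff.2 List.nodup_range'
  have hne : L.length + 1 ∉ L := fun hm =>
    (List.nodup_append.1 hnd).2.2 _ hm _ (by simp) rfl
  constructor
  · intro hL
    have h1 : L.countP (fun y => decide (y < L.length + 1)) = L.length := by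
      rw [List.countP_eq_length]
      intro a ha
      have h2 := hL a ha
      have h3 : a ≠ L.length + 1 := fun h => hne (h ▸ ha)
      simp only [decide_eq_true_eq]
      omega
    have h2 : R.countP (fun y => decide (y < L.length + 1)) = 0 := by omega
    rw [List.countP_eq_zero] at h2
    intro y hy
    simpa using h2 y hy
  · intro hR
    have h2 : R.countP (fun y => decide (y < L.length + 1)) = 0 := by
      rw [List.countP_eq_zero]
      intro y hy
      simpa using hR y hy
    have h1 : L.countP (fun y => decide (y < L.length + 1)) = L.length := by omega
    rw [List.countP_eq_length] at h1
    intro y hy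
    have := h1 y hy
    simp only [decide_eq_true_eq] at this
    omega

/-- The number of fixed points of the sequence `L`. -/
def fixCount (L : List ℕ) : ℕ :=
  ((List.range L.length).filter (fun j => decide (L.getD j 0 = j + 1))).length

lemma fixCount_concat (L : List ℕ) (x : ℕ) :
    fixCount (L ++ [x]) = fixCount L + if x = L.length + 1 then 1 else 0 := by
  unfold fixCount
  rw [List.length_append, List.length_singleton, List.range_succ, List.filter_append,
    List.length_append]
  congr 1
  · congr 1
    apply List.filter_congr
    intro j hj
    rw [List.getD_append _ _ _ _ (List.mem_range.1 hj)]
  · by_cases h : x = L.length + 1 <;> simp [h]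

/-! ### Column strictness past the last fixed point -/

/-- The state of the rows `A`, `B` after `r` fixed points, with the entries of `R` still to be
inserted. The first `p` entries of `A` and `q` entries of `B` are those present right after the
last fixed point; `A[0..p)` can no longer be bumped, and the rest of the two rows is
column-strict. -/
def RowInv (A B R : List ℕ) (r : ℕ) : Prop :=
  ∃ p q, p ≤ A.length ∧ q ≤ B.length ∧ q + r ≤ p ∧
    (∀ j, q + j < B.length → p + j < A.length ∧ A.getD (p + j) 0 < B.getD (q + j) 0) ∧
    ∀ i < p, ∀ y ∈ R, A.getD i 0 ≤ y

lemma RowInv.length_le {A B R : List ℕ} {r : ℕ} (h : RowInv A B R r) :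
    B.length + r ≤ A.length := by
  obtain ⟨p, q, hp, hq, hr, hj, -⟩ := h
  by_cases hB : B.length = q
  · omega
  · have := (hj (B.length - 1 - q) (by omega)).1
    omega

lemma RowInv.fixed {A B R : List ℕ} {r x : ℕ} (h : RowInv A B (x :: R) r)
    (hA : ∀ a ∈ A, a ≤ x) (hR : ∀ y ∈ R, x ≤ y) : RowInv (A ++ [x]) B R (r + 1) := by
  have hl := h.length_le
  refine ⟨A.length + 1, B.length, by simp, le_rfl, by omega, fun j hj => by omega, ?_⟩
  intro i hi y hy
  have hm : (A ++ [x]).getD i 0 ∈ A ++ [x] := by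
    rw [List.getD_eq_getElem _ _ (by simpa using hi)]
    exact List.getElem_mem _
  have : (A ++ [x]).getD i 0 ≤ x := by
    rcases List.mem_append.1 hm with h | h
    · exact hA _ h
    · exact (List.mem_singleton.1 h).le
  exact this.trans (hR y hy)

lemma RowInv.step {A B A' B' R : List ℕ} {r x : ℕ} (h : RowInv A B (x :: R) r)
    (hs : TwoRowStep x A B A' B') : RowInv A' B' R r := by
  obtain ⟨p, q, hp, hq, hr, hj, hf⟩ := h
  cases hs with
  | append _ _ hx =>
    refine ⟨p, q, by simp; omega, hq, hr, ?_, ?_⟩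
    · intro j hjB
      obtain ⟨h1, h2⟩ := hj j hjB
      rw [List.getD_append _ _ _ _ h1]
      exact ⟨by simp; omega, h2⟩
    · intro i hi y hy
      rw [List.getD_append _ _ _ _ (by omega)]
      exact hf i hi y (by simp [hy])
  | bump U V B b hU hb hB =>
    have hUb : (U ++ b :: V).getD U.length 0 = b := by simp
    have hUx : (U ++ x :: V).getD U.length 0 = x := by simp
    have hoff : ∀ i, i ≠ U.length → (U ++ x :: V).getD i 0 = (U ++ b :: V).getD i 0 := by
      intro i hi
      rcases lt_or_gt_of_ne hi with h | h
      · rw [List.getD_append _ _ _ _ h, List.getD_append _ _ _ _ h]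
      · obtain ⟨k, rfl⟩ := Nat.exists_eq_add_of_lt h
        rw [List.getD_append_right _ _ _ _ (by omega), List.getD_append_right _ _ _ _ (by omega)]
        simp [show U.length + k + 1 - U.length = k + 1 by omega]
    have hpU : p ≤ U.length := by
      by_contra hlt
      have := hf U.length (by omega) x (by simp)
      omega
    -- an entry of `B` paired with `b` (same offset past `q` as that of `b` past `p`) would exceed
    -- `b` by column strictness, contradicting `hB`
    have hBU : B.length + p ≤ U.length + q := by
      by_contra hlt
      have h1 := (hj (U.length - p) (by omega)).2
      rw [show p + (U.length - p) = U.length by omega, hUb,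
        List.getD_eq_getElem _ _ (by omega)] at h1
      have := hB _ (List.getElem_mem (l := B) (n := q + (U.length - p)) (by omega))
      omega
    simp only [List.length_append, List.length_cons] at hp hj
    refine ⟨p, q, by simp; omega, by simp; omega, hr, ?_, ?_⟩
    · intro j hjB
      simp only [List.length_append, List.length_cons, List.length_nil] at hjB ⊢
      by_cases hlast : q + j = B.length
      · refine ⟨by omega, ?_⟩
        rw [hlast, List.getD_append_right _ _ _ _ le_rfl]
        simp only [Nat.sub_self, List.getD_cons_zero]
        refine lt_of_le_of_lt ?_ hb
        by_cases hpj : p + j = U.length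
        · rw [hpj, hUx]
        · rw [List.getD_append _ _ _ _ (by omega), List.getD_eq_getElem _ _ (by omega)]
          exact hU _ (List.getElem_mem _)
      · obtain ⟨h1, h2⟩ := hj j (by omega)
        refine ⟨by omega, ?_⟩
        rw [List.getD_append _ _ _ _ (show q + j < B.length by omega)]
        by_cases hpj : p + j = U.length
        · rw [hpj, hUb] at h2
          rw [hpj, hUx]
          omega
        · rwa [hoff _ hpj]
    · intro i hi y hy
      rw [hoff i (by omega)]
      exact hf i hi y (by simp [hy])

lemma rows_inv {n : ℕ} (L R : List ℕ) (hperm : (L ++ R).Perm (List.range' 1 n))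
    (hrows : (rsTableau (L ++ R)).length ≤ 2) :
    ((rsTableau L).getD 0 [] ++ (rsTableau L).getD 1 []).Perm L ∧
    ((rsTableau L).getD 0 []).Pairwise (· ≤ ·) ∧
    RowInv ((rsTableau L).getD 0 []) ((rsTableau L).getD 1 []) R (fixCount L) := by
  induction L using List.reverseRecOn generalizing R with
  | nil =>
    refine ⟨by simp [rsTableau], by simp [rsTableau], 0, 0, ?_⟩
    simp [rsTableau, fixCount]
  | append_singleton L x ih =>
    rw [List.append_assoc, List.singleton_append] at hperm hrows
    obtain ⟨ihp, ihs, ihr⟩ := ih (x :: R) hperm hrows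
    have hT : rsTableau (L ++ [x]) = rsInsert (rsTableau L) x := by simp [rsTableau]
    have hfold : (R.foldl rsInsert (rsTableau (L ++ [x]))).length ≤ 2 := by
      simpa [rsTableau] using hrows
    have hlen := (length_le_foldl R _).trans hfold
    have hs := twoRowStep_of_length (rsTableau L) x (hT ▸ hlen)
    rw [← hT] at hs
    have hfut := fun y a => future_ge R _ hfold (hs.sorted ihs) (x := y) (a := a)
    refine ⟨hs.perm.trans (ihp.append_right _), hs.sorted ihs, ?_⟩
    rw [fixCount_concat]
    split_ifs with hx
    · have hsplit := fixed_split (hx ▸ hperm)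
      rw [← hx] at hsplit
      generalize (rsTableau L).getD 0 [] = A at *
      generalize (rsTableau L).getD 1 [] = B at *
      generalize (rsTableau (L ++ [x])).getD 0 [] = A' at *
      generalize (rsTableau (L ++ [x])).getD 1 [] = B' at *
      cases hs with
      | append _ _ hA =>
        refine ihr.fixed hA ?_
        by_cases hB : ∃ a ∈ B, x < a
        · obtain ⟨a, ha, hxa⟩ := hB
          exact hfut x a (by simp) ha hxa
        · push Not at hB
          refine hsplit.1 fun y hy => ?_
          rcases List.mem_append.1 (ihp.mem_iff.2 hy) with h | h
          · exact hA y h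
          · exact hB y h
      | bump U V B b hU hb hB =>
        -- no bump happens at a fixed point: `b > x` precedes `x`, so something smaller follows it
        have h1 := hsplit.2 (hfut x b (by simp) (by simp) hb) b (ihp.mem_iff.1 (by simp))
        omega
    · exact ihr.step hs

/-- if the RSK shape `(γ_1, γ_2)` of a permutation `σ` of `{1,…,n}` has
exactly two rows and `σ` has exactly `r` fixed points, then `γ_1 ≥ γ_2 + r`. -/
theorem stmt_18 (n : ℕ) (σ : List ℕ) (hperm : σ.Perm (List.range' 1 n))
    (hrows : (rskShape σ).length = 2)
    (r : ℕ)
    (hr : r = ((List.range n).filter (fun j => decide (σ.getD j 0 = j + 1))).length) :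
    (rskShape σ).getD 0 0 ≥ (rskShape σ).getD 1 0 + r := by
  have hlen : σ.length = n := by simpa using hperm.length_eq
  have hrows' : (rsTableau σ).length = 2 := by simpa [rskShape] using hrows
  obtain ⟨-, -, h⟩ := rows_inv σ [] (by simpa using hperm) (by simpa using hrows'.le)
  have hl := h.length_le
  have hr' : r = fixCount σ := by rw [hr, fixCount, hlen]
  obtain ⟨A, B, hAB⟩ := List.length_eq_two.1 hrows'
  rw [hAB] at hl
  simp only [rskShape, hAB, hr']
  simpa using hl
end
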